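/- arXiv:1510.00279 — 3 statements merged into one kernel-verified Lean document; each statement's English description precedes it below -/
import Mathlib

section
/- Every Sturmian word s satisfies rep(s) ≤ √10 − 3/2. -/
/-!
Suppose that `rep(x) > √10 - 3/2` for a Sturmian word `x`.  Since the prefixes of `x` recur, `x`
extends to a two-sided word `X` with the same factors (`IsSturmian.extend`).

The bispecial factors of `X` form a sequence of levels (`Lvl`).  A bispecial factor has length
`p + q - 2`, where `p` and `q` are the two possible distances between successive occurrences, and
the letters preceding and following an occurrence tell which distance precedes and follows it.  As
there is only one right special factor of each length, at most one of the two distances can be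
repeated (`Lvl.dich`), and this leads to a next level with distances `(p, p + q)` or `(q, p + q)`
(`Lvl.step`).

A stretch of `X` starting at `j ≥ 0`, of length `L`, on which the shift by `P` is the identity,
yields `r(L, x) ≤ j + P + L`.  The assumption on `rep(x)` thus bounds `L` by `γ (j + P)` for large
`P`, with a constant `γ < γ₀ = 4√10/15 + 2/3 = 1/(√10 - 5/2)` (`Good`).  Between occurrences of a
bispecial factor that end a gap `q`, the word has period `p` (`Lvl.run`), so these occurrences
cannot be far apart near the origin (`Good.gapR`).  It follows that, at every sufficiently large
level, the first positive occurrences ending the two kinds of gap are `α` and `α + p`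
(`Good.enter`), and that `α ≤ γ p` and `α + p ≤ γ q` (`Good.bound`, up to rounding of `γ`).

The position `α` evolves in a controlled way along the levels (`Good.trans`): after grouping, there
is a double move `(p, q, α) ↦ (p + q, 2p + q, α + p)` and a single move
`(p, q, α) ↦ (q, p + q, α + p)` (`Good.trans2`).  The linear inequalities available at each level,
with `γ ≤ 1.51`, force the moves to be eventually periodic with the block double, single, single
(`Good.exists_two`, `Good.two_next`).  The block maps `(p, q)` to `(3p + 2q, 5p + 3q)`; it preserves
`3α - p - 2q`, and changes the sign of `2q² - 5p²`.  Therefore `q / p → √(5/2)` and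
`(α + p) / q → γ₀`, contradicting `α + p ≤ γ q` with `γ < γ₀` (`Good.contradiction`).
-/

open Filter

/-- `rc n x` : length of the shortest prefix of the infinite word `x` containing two
(possibly overlapping) occurrences of some word of length `n`.  Here `x k` is the
`(k+1)`-st letter of the word. -/
noncomputable def rc {A : Type*} (n : ℕ) (x : ℕ → A) : ℕ :=
  sInf {m | ∃ j, j + n < m ∧ ∀ t < n, x (j + t) = x (m - n + t)}

/-- subword complexity: the number of distinct factors of length `n` of `x` -/
noncomputable def pc {A : Type*} (n : ℕ) (x : ℕ → A) : ℕ :=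
  Set.ncard {w : Fin n → A | ∃ k, ∀ t : Fin n, w t = x (k + t.1)}

def IsSturmian {A : Type*} (x : ℕ → A) : Prop := ∀ n ≥ 1, pc n x = n + 1

/-- exponent of repetition: `liminf r(n,x)/n` -/
noncomputable def repExp {A : Type*} (x : ℕ → A) : EReal :=
  Filter.atTop.liminf fun n => (((rc n x : ℝ) / (n : ℝ) : ℝ) : EReal)

/-- the Sturmian word of slope θ and intercept ρ: its `n`-th letter (`n ≥ 1`, here
0-indexed by `k = n - 1`) is `⌊(n+1)θ+ρ⌋ - ⌊nθ+ρ⌋` -/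
noncomputable def sturmianFloor (θ ρ : ℝ) (k : ℕ) : ℤ :=
  ⌊((k : ℝ) + 2) * θ + ρ⌋ - ⌊((k : ℝ) + 1) * θ + ρ⌋

/-- the word `s′_{θ,ρ}`: its `n`-th letter (`n ≥ 1`, here 0-indexed by `k = n - 1`)
is `⌈(n+1)θ+ρ⌉ - ⌈nθ+ρ⌉` -/
noncomputable def sturmianCeil (θ ρ : ℝ) (k : ℕ) : ℤ :=
  ⌈((k : ℝ) + 2) * θ + ρ⌉ - ⌈((k : ℝ) + 1) * θ + ρ⌉

/-! ### Return-time levels of a two-sided word -/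

/-- `Lvl X n p q c d T`: `T` is the set of positions at which a fixed word of length
`n = p + q - 2` occurs in the two-sided word `X` (`occ`, `eq`).  Each occurrence is followed
(`nxt`) and preceded (`prv`) by one of the letters `c ≠ d`.  An occurrence followed by `c` has the
next occurrence exactly `p` further on, and that one is preceded by `c` (`nc`, `gc`); an occurrence
followed by `d` has it `q` further on, preceded by `d` (`nd`, `gd`).  The fields `bc`, `bd` are the
mirror images, read from right to left.  For a Sturmian word the words arising in this way are the
bispecial factors and `p`, `q` are their return times.  Only the relation `n + 2 = p + q` is
recorded, so the empty word (`n = 0`, `p = q = 1`) is included. -/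
structure Lvl {A : Type*} (X : ℤ → A) (n p q : ℤ) (c d : A) (T : Set ℤ) : Prop where
  hp : 1 ≤ p
  hq : 1 ≤ q
  hn : n + 2 = p + q
  ne : T.Nonempty
  cd : c ≠ d
  occ : ∀ t ∈ T, ∀ s, (∀ i, 0 ≤ i → i < n → X (s + i) = X (t + i)) → s ∈ T
  eq : ∀ t ∈ T, ∀ s ∈ T, ∀ i, 0 ≤ i → i < n → X (s + i) = X (t + i)
  nxt : ∀ t ∈ T, X (t + n) = c ∨ X (t + n) = d
  prv : ∀ t ∈ T, X (t - 1) = c ∨ X (t - 1) = d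
  nc : ∀ t ∈ T, X (t + n) = c → t + p ∈ T ∧ X (t + p - 1) = c
  nd : ∀ t ∈ T, X (t + n) = d → t + q ∈ T ∧ X (t + q - 1) = d
  bc : ∀ t ∈ T, X (t - 1) = c → t - p ∈ T ∧ X (t - p + n) = c
  bd : ∀ t ∈ T, X (t - 1) = d → t - q ∈ T ∧ X (t - q + n) = d
  gc : ∀ t ∈ T, X (t + n) = c → ∀ s ∈ T, t < s → t + p ≤ s
  gd : ∀ t ∈ T, X (t + n) = d → ∀ s ∈ T, t < s → t + q ≤ s

namespace Lvl

variable {A : Type*} {X : ℤ → A} {n p q : ℤ} {c d : A} {T : Set ℤ}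

/-- The notion of level is symmetric under exchanging the roles of `(p, c)` and `(q, d)`. -/
theorem swap (h : Lvl X n p q c d T) : Lvl X n q p d c T :=
  ⟨h.hq, h.hp, by rw [h.hn]; ring, h.ne, h.cd.symm, h.occ, h.eq,
    fun t ht => (h.nxt t ht).symm, fun t ht => (h.prv t ht).symm,
    h.nd, h.nc, h.bd, h.bc, h.gd, h.gc⟩

/-- The level of the empty word: it occurs everywhere, with return times `1` and `1`. -/
theorem start (hcd : c ≠ d) (hX : ∀ z, X z = c ∨ X z = d) :
    Lvl X 0 1 1 c d Set.univ where
  hp := le_refl _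
  hq := le_refl _
  hn := by norm_num
  ne := ⟨0, trivial⟩
  cd := hcd
  occ := fun _ _ _ _ => trivial
  eq := fun _ _ _ _ i h0 h1 => by omega
  nxt := fun t _ => hX _
  prv := fun t _ => hX _
  nc := fun t _ h => ⟨trivial, by simpa using h⟩
  nd := fun t _ h => ⟨trivial, by simpa using h⟩
  bc := fun t _ h => ⟨trivial, by simpa using h⟩
  bd := fun t _ h => ⟨trivial, by simpa using h⟩
  gc := fun t _ _ s _ h => by omega
  gd := fun t _ _ s _ h => by omega

/-- The gap preceding an occurrence preceded by `c` is exactly `p` long: backward version of the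
field `gc`. -/
theorem gcb (h : Lvl X n p q c d T) {t s : ℤ} (ht : t ∈ T) (htc : X (t - 1) = c) (hs : s ∈ T)
    (hst : s < t) : s ≤ t - p := by
  by_contra hlt
  have := h.bc t ht htc
  have h1 := h.gc _ this.1 this.2 s hs (by omega)
  omega

theorem gdb (h : Lvl X n p q c d T) {t s : ℤ} (ht : t ∈ T) (htc : X (t - 1) = d) (hs : s ∈ T)
    (hst : s < t) : s ≤ t - q := h.swap.gcb ht htc hs hst

/-- If an occurrence preceded by `d` is always followed by `c`, then two gaps of length `q` are never
adjacent.  The occurrences followed by `c` form the next level: they are the occurrences of a word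
of length `n + p`, and their gaps are either a single `p`, or a `p` followed by a `q`. -/
theorem step (h : Lvl X n p q c d T) (hex : ∃ t ∈ T, X (t + n) = c)
    (hdd : ∀ t ∈ T, X (t - 1) = d → X (t + n) = c) :
    Lvl X (n + p) p (p + q) c d {t | t ∈ T ∧ X (t + n) = c} := by
  have hp := h.hp
  have hq := h.hq
  have hn := h.hn
  refine ⟨hp, by omega, by omega, ?_, h.cd, ?_, ?_, ?_, ?_, ?_, ?_, ?_, ?_, ?_, ?_⟩
  · obtain ⟨t, h1, h2⟩ := hex
    exact ⟨t, h1, h2⟩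
  · rintro t ⟨ht, htc⟩ s hs
    refine ⟨h.occ t ht s fun i h0 h1 => hs i h0 (by omega), ?_⟩
    rw [hs n (by omega) (by omega), htc]
  · rintro t ⟨ht, htc⟩ s ⟨hs, hsc⟩ i h0 h1
    rcases lt_trichotomy i n with hi | hi | hi
    · exact h.eq t ht s hs i h0 hi
    · rw [hi, htc, hsc]
    · have := h.eq _ (h.nc t ht htc).1 _ (h.nc s hs hsc).1 (i - p) (by omega) (by omega)
      rwa [show s + p + (i - p) = s + i by ring, show t + p + (i - p) = t + i by ring] at this
  · rintro t ⟨ht, htc⟩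
    have := h.nxt _ (h.nc t ht htc).1
    rwa [show t + p + n = t + (n + p) by ring] at this
  · rintro t ⟨ht, htc⟩
    exact h.prv t ht
  · rintro t ⟨ht, htc⟩ hc
    have := h.nc t ht htc
    refine ⟨⟨this.1, ?_⟩, this.2⟩
    rwa [show t + p + n = t + (n + p) by ring]
  · rintro t ⟨ht, htc⟩ hc
    have h1 := h.nc t ht htc
    have h2 := h.nd _ h1.1 (by rwa [show t + p + n = t + (n + p) by ring])
    rw [show t + p + q = t + (p + q) by ring] at h2
    exact ⟨⟨h2.1, hdd _ h2.1 h2.2⟩, h2.2⟩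
  · rintro t ⟨ht, htc⟩ hc
    have := h.bc t ht hc
    refine ⟨this, ?_⟩
    rwa [show t - p + (n + p) = t + n by ring]
  · rintro t ⟨ht, htc⟩ hc
    have h1 := h.bd t ht hc
    have h2 : X (t - q - 1) = c := by
      rcases h.prv _ h1.1 with h3 | h3
      · exact h3
      · exact absurd ((hdd _ h1.1 h3).symm.trans h1.2) h.cd
    have h3 := h.bc _ h1.1 h2
    refine ⟨by rwa [show t - (p + q) = t - q - p by ring], ?_⟩
    rw [show t - (p + q) + (n + p) = t - q + n by ring]
    exact h1.2
  · rintro t ⟨ht, htc⟩ _ s ⟨hs, _⟩ hst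
    exact h.gc t ht htc s hs hst
  · rintro t ⟨ht, htc⟩ hd s ⟨hs, hsc⟩ hst
    have h1 := h.nc t ht htc
    have h2 := h.gc t ht htc s hs hst
    have h3 : X (t + p + n) = d := by rwa [show t + p + n = t + (n + p) by ring]
    have h4 : t + p ≠ s := by
      rintro rfl
      exact h.cd (hsc.symm.trans h3)
    have := h.gd _ h1.1 h3 s hs (by omega)
    omega

/-! ### Consequences of aperiodicity -/

/-- An infinite succession of gaps `p` would make `X` eventually `p`-periodic. -/
theorem not_all (h : Lvl X n p q c d T)
    (P1 : ∀ P : ℤ, 1 ≤ P → ∀ N : ℤ, ∃ s, N ≤ s ∧ X (s + P) ≠ X s) (t : ℤ) :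
    ¬ ∀ k : ℕ, t + k * p ∈ T ∧ X (t + k * p + n) = c := by
  intro hall
  have hp := h.hp
  have hq := h.hq
  have hn := h.hn
  obtain ⟨s, hs, hne⟩ := P1 p h.hp t
  apply hne
  obtain ⟨k, hk⟩ := Int.eq_ofNat_of_zero_le (Int.ediv_nonneg (show 0 ≤ s - t by omega) (by omega : 0 ≤ p))
  have e1 := Int.emod_add_mul_ediv (s - t) p
  have e2 := Int.emod_nonneg (s - t) (by omega : p ≠ 0)
  have e3 := Int.emod_lt_of_pos (s - t) (by omega : 0 < p)
  rw [hk] at e1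
  set i := (s - t) % p with hi
  have es : s = t + k * p + i := by linarith
  have hk1 := hall k
  have hk2 := hall (k + 1)
  have e4 : t + ((k + 1 : ℕ) : ℤ) * p = t + k * p + p := by push_cast; ring
  rw [e4] at hk2
  rcases lt_or_ge i n with hin | hin
  · rw [es, show t + k * p + i + p = t + k * p + p + i by ring]
    exact h.eq _ hk1.1 _ hk2.1 i e2 hin
  · have : i = n := by omega
    rw [es, this, show t + k * p + n + p = t + k * p + p + n by ring, hk1.2, hk2.2]

theorem ex_d (h : Lvl X n p q c d T)
    (P1 : ∀ P : ℤ, 1 ≤ P → ∀ N : ℤ, ∃ s, N ≤ s ∧ X (s + P) ≠ X s) {t : ℤ} (ht : t ∈ T) :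
    ∃ s ∈ T, t ≤ s ∧ X (s + n) = d := by
  by_contra! hcon
  apply h.not_all P1 t
  have hp := h.hp
  have key : ∀ s ∈ T, t ≤ s → X (s + n) = c := fun s hs hts =>
    (h.nxt s hs).resolve_right (hcon s hs hts)
  intro k
  have : t + k * p ∈ T := by
    induction k with
    | zero => simpa using ht
    | succ k ih =>
      have := (h.nc _ ih (key _ ih (by nlinarith))).1
      rwa [show t + ((k + 1 : ℕ) : ℤ) * p = t + k * p + p by push_cast; ring]
  exact ⟨this, key _ this (by nlinarith)⟩

theorem ex_c (h : Lvl X n p q c d T)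
    (P1 : ∀ P : ℤ, 1 ≤ P → ∀ N : ℤ, ∃ s, N ≤ s ∧ X (s + P) ≠ X s) {t : ℤ} (ht : t ∈ T) :
    ∃ s ∈ T, t ≤ s ∧ X (s + n) = c := h.swap.ex_d P1 ht

theorem unbdd (h : Lvl X n p q c d T) (B : ℤ) : ∃ t ∈ T, B ≤ t := by
  obtain ⟨t, ht⟩ := h.ne
  have hp := h.hp
  have hq := h.hq
  have key : ∀ k : ℕ, ∃ s ∈ T, t + k ≤ s := by
    intro k
    induction k with
    | zero => exact ⟨t, ht, by simp⟩
    | succ k ih =>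
      obtain ⟨s, hs, hk⟩ := ih
      rcases h.nxt s hs with hc | hc
      · exact ⟨_, (h.nc s hs hc).1, by push_cast; omega⟩
      · exact ⟨_, (h.nd s hs hc).1, by push_cast; omega⟩
  obtain ⟨s, hs, hk⟩ := key (B - t).toNat
  exact ⟨s, hs, by omega⟩

theorem ex_pd (h : Lvl X n p q c d T)
    (P1 : ∀ P : ℤ, 1 ≤ P → ∀ N : ℤ, ∃ s, N ≤ s ∧ X (s + P) ≠ X s) (B : ℤ) :
    ∃ s, (s ∈ T ∧ X (s - 1) = d) ∧ B < s := by
  obtain ⟨t, ht, hB⟩ := h.unbdd B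
  obtain ⟨s, hs, hts, hd⟩ := h.ex_d P1 ht
  have := h.nd s hs hd
  have hq := h.hq
  exact ⟨_, this, by omega⟩

/-- The first element exceeding `B` among the occurrences preceded by `d`. -/
theorem ex_first (h : Lvl X n p q c d T)
    (P1 : ∀ P : ℤ, 1 ≤ P → ∀ N : ℤ, ∃ s, N ≤ s ∧ X (s + P) ≠ X s) (B : ℤ) :
    ∃ s, (s ∈ T ∧ X (s - 1) = d) ∧ B < s ∧ ∀ t ∈ T, X (t - 1) = d → B < t → s ≤ t := by
  obtain ⟨m, hm⟩ := h.ex_pd P1 B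
  obtain ⟨s, hs, hmin⟩ := Int.exists_least_of_bdd
    (P := fun s => (s ∈ T ∧ X (s - 1) = d) ∧ B < s) ⟨B, fun z hz => hz.2.le⟩ ⟨m, hm⟩
  exact ⟨s, hs.1, hs.2, fun t h1 h2 h3 => hmin t ⟨⟨h1, h2⟩, h3⟩⟩

/-- At most one of the two return gaps can be repeated.  If both `p p` and `q q` occurred, then the
word of the level extended on the left by `c`, and also the one extended by `d`, could be continued
on the right by both letters, so there would be two distinct right special words of length `n + 1`
(`P2` excludes this). -/
theorem dich (h : Lvl X n p q c d T)
    (P1 : ∀ P : ℤ, 1 ≤ P → ∀ N : ℤ, ∃ s, N ≤ s ∧ X (s + P) ≠ X s)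
    (P2 : ∀ m : ℤ, 0 ≤ m → ∀ s₁ s₂ s₃ s₄ : ℤ,
      (∀ i, 0 ≤ i → i < m → X (s₁ + i) = X (s₂ + i)) → X (s₁ + m) ≠ X (s₂ + m) →
      (∀ i, 0 ≤ i → i < m → X (s₃ + i) = X (s₄ + i)) → X (s₃ + m) ≠ X (s₄ + m) →
      ∀ i, 0 ≤ i → i < m → X (s₁ + i) = X (s₃ + i)) :
    (∀ t ∈ T, X (t - 1) = d → X (t + n) = c) ∨ (∀ t ∈ T, X (t - 1) = c → X (t + n) = d) := by
  -- A gap `p` followed by a gap `p` must at some point be followed by a gap `q`, by aperiodicity.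
  have aux : ∀ {n p q : ℤ} {c d : A}, Lvl X n p q c d T → ∀ t ∈ T, X (t - 1) = c → X (t + n) = c →
      ∃ u ∈ T, X (u - 1) = c ∧ X (u + n) = d := by
    intro n p q c d h t ht _ htc
    by_contra! hcon
    apply h.not_all P1 t
    intro k
    induction k with
    | zero => simpa using ⟨ht, htc⟩
    | succ k ih =>
      have := h.nc _ ih.1 ih.2
      rw [show t + ((k + 1 : ℕ) : ℤ) * p = t + k * p + p by push_cast; ring]
      exact ⟨this.1, (h.nxt _ this.1).resolve_right (hcon _ this.1 this.2)⟩
  have win : ∀ {e : A} {t u : ℤ}, t ∈ T → u ∈ T → X (t - 1) = e → X (u - 1) = e →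
      ∀ i, 0 ≤ i → i < n + 1 → X (t - 1 + i) = X (u - 1 + i) := by
    intro e t u ht hu h1 h2 i h0 hi
    rcases eq_or_lt_of_le h0 with h3 | h3
    · rw [← h3, add_zero, add_zero, h1, h2]
    · have := h.eq u hu t ht (i - 1) (by omega) (by omega)
      rwa [show t + (i - 1) = t - 1 + i by ring, show u + (i - 1) = u - 1 + i by ring] at this
  by_contra! hcon
  obtain ⟨⟨s, hs, hs1, hs2⟩, t, ht, ht1, ht2⟩ := hcon
  have hs2 := (h.nxt s hs).resolve_left hs2
  have ht2 := (h.nxt t ht).resolve_right ht2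
  obtain ⟨u, hu, hu1, hu2⟩ := aux h t ht ht1 ht2
  obtain ⟨v, hv, hv1, hv2⟩ := aux h.swap s hs hs1 hs2
  have hp := h.hp
  have hq := h.hq
  have hn := h.hn
  have e : ∀ z : ℤ, z - 1 + (n + 1) = z + n := fun z => by ring
  have := P2 (n + 1) (by omega) (t - 1) (u - 1) (s - 1) (v - 1) (win ht hu ht1 hu1)
    (by rw [e, e, ht2, hu2]; exact h.cd) (win hs hv hs1 hv1)
    (by rw [e, e, hs2, hv2]; exact h.cd.symm) 0 le_rfl (by omega)
  rw [add_zero, add_zero, ht1, hs1] at this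
  exact h.cd this

/-! ### Periodic stretches -/

/-- Let `v` be an occurrence preceded by `d`, with no other such occurrence strictly between `a` and
`v`.  Then the gaps between `a` and `v` all equal `p`, except the last one, which has length `q`;
as the word of the level itself has period `p`, the shift by `p` preserves `X` from `a` up to two
letters before `v`. -/
theorem run (h : Lvl X n p q c d T)
    (P1 : ∀ P : ℤ, 1 ≤ P → ∀ N : ℤ, ∃ s, N ≤ s ∧ X (s + P) ≠ X s) (hq2 : 2 ≤ q)
    {v a : ℤ} (hv : v ∈ T) (hvd : X (v - 1) = d)
    (hno : ∀ u ∈ T, X (u - 1) = d → a < u → v ≤ u) :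
    ∀ s, a ≤ s → s < v - 2 → X (s + p) = X s := by
  have hp := h.hp
  have hq := h.hq
  have hn := h.hn
  -- Walk back from `v` one occurrence at a time until `a` is reached.
  have key : ∀ k : ℕ, ∃ u ∈ T, u < v ∧ (u ≤ a ∨ u ≤ v - k) ∧
      ∀ s, u ≤ s → s < v - 2 → X (s + p) = X s := by
    intro k
    induction k with
    | zero =>
      have h1 := h.bd v hv hvd
      refine ⟨v - q, h1.1, by omega, Or.inr (by push_cast; omega), fun s hs1 hs2 => ?_⟩
      -- The word of the level has period `p`: compare it with itself at two occurrences `p` apart.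
      obtain ⟨t, ht⟩ := h.ne
      obtain ⟨t, ht, _, htc⟩ := h.ex_c P1 ht
      have h2 := h.eq t ht _ (h.nc t ht htc).1 (s - (v - q)) (by omega) (by omega)
      have h3 := h.eq t ht _ h1.1 (s - (v - q)) (by omega) (by omega)
      have h4 := h.eq t ht _ h1.1 (s - (v - q) + p) (by omega) (by omega)
      rw [show v - q + (s - (v - q)) = s by ring] at h3
      rw [show v - q + (s - (v - q) + p) = s + p by ring] at h4
      rw [h3, h4, ← h2]
      congr 1; ring
    | succ k ih =>
      obtain ⟨u, hu, huv, hua, heq⟩ := ih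
      rcases le_or_gt u a with h1 | h1
      · exact ⟨u, hu, huv, Or.inl h1, heq⟩
      · have h2 : X (u - 1) = c := (h.prv u hu).resolve_right fun h3 => by
          have := hno u hu h3 h1
          omega
        have h3 := h.bc u hu h2
        refine ⟨u - p, h3.1, by omega, Or.inr (by push_cast; omega), fun s hs1 hs2 => ?_⟩
        rcases lt_or_ge s u with h4 | h4
        · have h5 := h.eq _ h3.1 u hu (s - (u - p)) (by omega) (by omega)
          rw [show u + (s - (u - p)) = s + p by ring, show u - p + (s - (u - p)) = s by ring] at h5
          exact h5
        · exact heq s h4 hs2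
  obtain ⟨u, hu, huv, hua, heq⟩ := key (v - a).toNat
  intro s h1 h2
  exact heq s (by omega) h2

end Lvl

/-! ### Transitions between levels -/

/-- The standing hypotheses on the two-sided word `X`: it is not eventually periodic to the right
(`P1`); it has at most one right special word of each length (`P2`); and a stretch of length `L`
which starts at `j ≥ 0` and is preserved by the shift by `P ≥ M` satisfies `L + 5 ≤ γ (j + P)`
(`rep`).  The last condition is a lower bound on the exponent of repetition of the right half of
`X`; the summand `5` absorbs the bounded errors of the estimates below, at the cost of a slightly
larger `γ`. -/
structure Good {A : Type*} (X : ℤ → A) (M : ℤ) (γ : ℝ) : Prop where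
  M2 : 2 ≤ M
  γle : γ ≤ 151 / 100
  P1 : ∀ P : ℤ, 1 ≤ P → ∀ N : ℤ, ∃ s, N ≤ s ∧ X (s + P) ≠ X s
  P2 : ∀ m : ℤ, 0 ≤ m → ∀ s₁ s₂ s₃ s₄ : ℤ,
      (∀ i, 0 ≤ i → i < m → X (s₁ + i) = X (s₂ + i)) → X (s₁ + m) ≠ X (s₂ + m) →
      (∀ i, 0 ≤ i → i < m → X (s₃ + i) = X (s₄ + i)) → X (s₃ + m) ≠ X (s₄ + m) →
      ∀ i, 0 ≤ i → i < m → X (s₁ + i) = X (s₃ + i)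
  rep : ∀ j P L : ℤ, M ≤ P → 0 ≤ j → 0 ≤ L → (∀ s, j ≤ s → s < j + L → X (s + P) = X s) →
      ((L + 5 : ℤ) : ℝ) ≤ γ * ((j + P : ℤ) : ℝ)

/-- `α` is the first positive position in `T` that is preceded by the letter `d`. -/
def First {A : Type*} (X : ℤ → A) (T : Set ℤ) (d : A) (α : ℤ) : Prop :=
  α ∈ T ∧ X (α - 1) = d ∧ 0 < α ∧ ∀ t ∈ T, X (t - 1) = d → 0 < t → α ≤ t

/-- There is a level with return times `p` and `q`, with letters `c` and `d` respectively, for which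
the first positive occurrence preceded by `d` is at `α`, and the first one preceded by `c` is the
very next one, at `α + p`. -/
def St {A : Type*} (X : ℤ → A) (p q α : ℤ) : Prop :=
  ∃ n c d T, Lvl X n p q c d T ∧ First X T d α ∧ First X T c (α + p)

section
variable {A : Type*} {X : ℤ → A} {M n p q α β : ℤ} {γ : ℝ} {c d : A} {T : Set ℤ}

/-- Bounds involving `γ` are weakened to integer ones, since `γ ≤ 151 / 100`. -/
theorem Good.toInt (g : Good X M γ) {a b : ℤ} (hb : 0 ≤ b) (h : (a : ℝ) ≤ γ * b) :
    100 * a ≤ 151 * b := by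
  have h1 : γ * b ≤ 151 / 100 * (b : ℝ) :=
    mul_le_mul_of_nonneg_right g.γle (by exact_mod_cast hb)
  have : (100 * a : ℝ) ≤ 151 * b := by linarith
  exact_mod_cast this

/-- The basic estimate: if no occurrence preceded by `d` lies strictly between `a` and `l`, the word
is `p`-periodic between `a` and `l - 2` by `Lvl.run`, and the bound on repetitions applies. -/
theorem Good.gapR (g : Good X M γ) (h : Lvl X n p q c d T) (hp : M ≤ p) (hq : M ≤ q) {a l : ℤ}
    (ha : 0 ≤ a) (hl : ∀ t ∈ T, X (t - 1) = d → a < t → l ≤ t) :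
    ((l - a + 3 : ℤ) : ℝ) ≤ γ * ((a + p : ℤ) : ℝ) := by
  have := g.M2
  obtain ⟨v, ⟨hv, hvd⟩, hav, hmin⟩ := h.ex_first g.P1 a
  have hlv := hl v hv hvd hav
  have := g.rep a p (max 0 (l - 2 - a)) hp ha (le_max_left _ _) fun s h1 h2 =>
    h.run g.P1 (by omega) hv hvd hmin s h1 (by omega)
  refine le_trans ?_ this
  exact_mod_cast (by omega : l - a + 3 ≤ max 0 (l - 2 - a) + 5)

theorem Good.gap (g : Good X M γ) (h : Lvl X n p q c d T) (hp : M ≤ p) (hq : M ≤ q) {a l : ℤ}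
    (ha : 0 ≤ a) (hl : ∀ t ∈ T, X (t - 1) = d → a < t → l ≤ t) :
    100 * (l - a + 3) ≤ 151 * (a + p) :=
  g.toInt (by have := g.M2; omega) (g.gapR h hp hq ha hl)

theorem Good.first (g : Good X M γ) (h : Lvl X n p q c d T) : ∃ α, First X T d α := by
  obtain ⟨s, ⟨h1, h2⟩, h3, h4⟩ := h.ex_first g.P1 0
  exact ⟨s, h1, h2, h3, h4⟩

/-- If the first occurrence preceded by `d` comes before the first one preceded by `c`, the latter
has to follow immediately: otherwise two successive gaps `q` at the beginning contradict the
bounds on repetitions. -/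
theorem Good.enter_aux (g : Good X M γ) (h : Lvl X n p q c d T) (hp : M ≤ p) (hq : M ≤ q)
    (hα : First X T d α) (hβ : First X T c β) (hαβ : α < β) : St X p q α := by
  have hM := g.M2
  refine ⟨n, c, d, T, h, hα, ?_⟩
  obtain ⟨a1, a2, a3, a4⟩ := hα
  obtain ⟨b1, b2, b3, b4⟩ := hβ
  rcases h.nxt α a1 with hl | hl
  · have h1 := h.nc α a1 hl
    have h2 := h.gc α a1 hl β b1 hαβ
    have h3 := b4 _ h1.1 h1.2 (by omega)
    obtain rfl : α + p = β := by omega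
    exact ⟨b1, b2, b3, b4⟩
  · exfalso
    have h1 := h.nd α a1 hl
    have h2 := h.gd α a1 hl β b1 hαβ
    have h3 : α + q ≠ β := by
      rintro rfl
      exact h.cd (b2.symm.trans h1.2)
    have h4 := h.gcb b1 b2 h1.1 (by omega)
    have e1 := g.gap h.swap hq hp le_rfl (fun t ht htc hpos => b4 t ht htc hpos)
    have e2 := g.gap h hp hq a3.le (fun t ht _ hpos => h.gd α a1 hl t ht hpos)
    omega

theorem Good.enter (g : Good X M γ) (h : Lvl X n p q c d T) (hp : M ≤ p) (hq : M ≤ q) :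
    (∃ α, St X p q α) ∨ (∃ α, St X q p α) := by
  obtain ⟨α, hα⟩ := g.first h
  obtain ⟨β, hβ⟩ := g.first h.swap
  rcases lt_trichotomy α β with h1 | h1 | h1
  · exact Or.inl ⟨α, g.enter_aux h hp hq hα hβ h1⟩
  · subst h1
    exact absurd (hβ.2.1.symm.trans hα.2.1) h.cd
  · exact Or.inr ⟨β, g.enter_aux h.swap hq hp hβ hα h1⟩

theorem Good.bound (g : Good X M γ) (h : St X p q α) (hp : M ≤ p) (hq : M ≤ q) :
    0 < α ∧ 100 * α ≤ 151 * p ∧ 100 * (α + p) ≤ 151 * q ∧ ((α + p : ℤ) : ℝ) ≤ γ * (q : ℝ) := by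
  obtain ⟨n, c, d, T, h, ⟨a1, a2, a3, a4⟩, b1, b2, b3, b4⟩ := h
  have e1 := g.gap h hp hq le_rfl (fun t ht htc hpos => a4 t ht htc hpos)
  have e2 := g.gap h.swap hq hp le_rfl (fun t ht htc hpos => b4 t ht htc hpos)
  have e3 := g.gapR h.swap hq hp le_rfl (fun t ht htc hpos => b4 t ht htc hpos)
  refine ⟨a3, by omega, by omega, ?_⟩
  rw [zero_add] at e3
  refine le_trans ?_ e3
  exact_mod_cast (by omega)

/-- Passing from a level in standard position to the next one.  According to `Lvl.dich` the next
level has return times `(p, p + q)` or `(q, p + q)`; in both cases the bounds on repetitions force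
it to be in standard position again, and they leave an inequality restricting when the case can
occur. -/
theorem Good.trans (g : Good X M γ) (h : St X p q α) (hp : M ≤ p) (hq : M ≤ q) :
    (St X p (p + q) α ∧ 100 * (2 * p + q) ≤ 151 * (α + p)) ∨
    (St X q (p + q) (α + p) ∧ 100 * (p + q) ≤ 151 * (α + p)) := by
  obtain ⟨n, c, d, T, h, ⟨a1, a2, a3, a4⟩, b1, b2, b3, b4⟩ := h
  have hM := g.M2
  have hn := h.hn
  have a5 : X (α + n) = c := by
    have := (h.bc _ b1 b2).2
    rwa [show α + p - p = α by ring] at this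
  rcases h.dich g.P1 g.P2 with hdd | hcc
  · left
    have hs := h.step ⟨α, a1, a5⟩ hdd
    rcases h.nxt _ b1 with hl | hl
    · refine ⟨⟨_, c, d, _, hs, ⟨⟨a1, a5⟩, a2, a3, fun t ht => a4 t ht.1⟩,
        ⟨⟨b1, hl⟩, b2, b3, fun t ht => b4 t ht.1⟩⟩, ?_⟩
      have h1 := h.nc _ b1 hl
      have := g.gap h hp hq (a := α) (l := α + 2 * p + q) a3.le (fun t ht htd hαt => by
        have h2 := h.gc α a1 a5 t ht hαt
        have h3 : α + p ≠ t := by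
          rintro rfl
          exact h.cd (b2.symm.trans htd)
        have h4 := h.gc _ b1 hl t ht (by omega)
        have h5 : α + p + p ≠ t := by
          rintro rfl
          exact h.cd (h1.2.symm.trans htd)
        have := h.gdb ht htd h1.1 (by omega)
        omega)
      omega
    · exfalso
      -- The gaps following `α` would be `p, q, p`, which leaves two incompatible repetitions.
      have h1 := h.nd _ b1 hl
      have h2 := h.nc _ h1.1 (hdd _ h1.1 h1.2)
      have e1 := g.gap hs.swap (by omega) (by omega) (a := 0) (l := α + 2 * p + q) le_rfl
        (fun t ht htc hpos => by
          have h3 := b4 t ht.1 htc hpos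
          have h4 : α + p ≠ t := by
            rintro rfl
            exact h.cd (ht.2.symm.trans hl)
          have h5 := h.gd _ b1 hl t ht.1 (by omega)
          have h6 : α + p + q ≠ t := by
            rintro rfl
            exact h.cd (htc.symm.trans h1.2)
          have := h.gc _ h1.1 (hdd _ h1.1 h1.2) t ht.1 (by omega)
          omega)
      have e2 := g.gap h hp hq (a := α) (l := α + p + q) a3.le (fun t ht htd hαt => by
        have h2 := h.gc α a1 a5 t ht hαt
        have h3 : α + p ≠ t := by
          rintro rfl
          exact h.cd (b2.symm.trans htd)
        have h4 := h.gd _ b1 hl t ht (by omega)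
        omega)
      omega
  · right
    have hl := hcc _ b1 b2
    have h1 := h.nd _ b1 hl
    have hs := h.swap.step ⟨_, b1, hl⟩ hcc
    have e2 := g.gap h hp hq (a := α) (l := α + p + q) a3.le (fun t ht htd hαt => by
      have h2 := h.gc α a1 a5 t ht hαt
      have h3 : α + p ≠ t := by
        rintro rfl
        exact h.cd (b2.symm.trans htd)
      have h4 := h.gd _ b1 hl t ht (by omega)
      omega)
    refine ⟨?_, by omega⟩
    -- At the next level no positive occurrence preceded by `d` comes before `α + p + q`.
    have low : ∀ t ∈ T, X (t + n) = d → X (t - 1) = d → 0 < t → α + p + q ≤ t := by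
      intro t ht htl htd hpos
      have h2 := a4 t ht htd hpos
      have h3 : α ≠ t := by
        rintro rfl
        exact h.cd (a5.symm.trans htl)
      have h4 := h.gc α a1 a5 t ht (by omega)
      have h5 : α + p ≠ t := by
        rintro rfl
        exact h.cd (b2.symm.trans htd)
      exact h.gd _ b1 hl t ht (by omega)
    rw [add_comm p q]
    refine ⟨_, d, c, _, hs, ⟨⟨b1, hl⟩, b2, b3, fun t ht => b4 t ht.1⟩, ?_⟩
    rcases h.nxt _ h1.1 with hl2 | hl2
    · exfalso
      have h2 := h.nc _ h1.1 hl2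
      have h3 := hcc _ h2.1 h2.2
      have := g.gap hs.swap (by omega) (by omega) (a := 0) (l := α + 2 * p + 2 * q) le_rfl
        (fun t ht htc hpos => by
          have h4 := low t ht.1 ht.2 htc hpos
          have h5 : α + p + q ≠ t := by
            rintro rfl
            exact h.cd (hl2.symm.trans ht.2)
          have h6 := h.gc _ h1.1 hl2 t ht.1 (by omega)
          have h7 : α + p + q + p ≠ t := by
            rintro rfl
            exact h.cd (h2.2.symm.trans htc)
          have := h.gd _ h2.1 h3 t ht.1 (by omega)
          omega)
      omega
    · exact ⟨⟨h1.1, hl2⟩, h1.2, by omega, fun t ht => low t ht.1 ht.2⟩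

/-! ### Large levels -/

/-- As long as only steps of the kind `(p, q) ↦ (p, p + q)` are possible, the length `n` grows while
the word of the level keeps the period `p` and keeps occurring at `t`.  Once `t + n` exceeds a place
`s` where the period `p` fails, this is impossible, so eventually `p` is replaced by `q`. -/
theorem Good.grow_aux (g : Good X M γ) (s t : ℤ) (hst : t ≤ s) : ∀ (k : ℕ) {n p q : ℤ} {c d : A}
    {T : Set ℤ}, Lvl X n p q c d T → t ∈ T → X (t - 1) = d → X (s + p) ≠ X s → s - t - n < k →
    ∃ n' p' q' c' d' T', Lvl X n' p' q' c' d' T' ∧ q ≤ p' ∧ p + q ≤ q' := by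
  intro k
  induction k with
  | zero =>
    intro n p q c d T h ht htd hs hk
    rcases h.dich g.P1 g.P2 with hdd | hcc
    · exfalso
      have hl := hdd t ht htd
      have := h.eq t ht _ (h.nc t ht hl).1 (s - t) (by omega) (by simp at hk; omega)
      rw [show t + p + (s - t) = s + p by ring, show t + (s - t) = s by ring] at this
      exact hs this
    · obtain ⟨u, hu, _, hud⟩ := h.ex_d g.P1 ht
      exact ⟨_, _, _, _, _, _, h.swap.step ⟨u, hu, hud⟩ hcc, le_rfl, by omega⟩
  | succ k ih =>
    intro n p q c d T h ht htd hs hk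
    have hp := h.hp
    rcases h.dich g.P1 g.P2 with hdd | hcc
    · have hl := hdd t ht htd
      obtain ⟨n', p', q', c', d', T', h', h1, h2⟩ := ih (h.step ⟨t, ht, hl⟩ hdd) ⟨ht, hl⟩ htd hs
        (by push_cast at hk; omega)
      exact ⟨n', p', q', c', d', T', h', by omega, by omega⟩
    · obtain ⟨u, hu, _, hud⟩ := h.ex_d g.P1 ht
      exact ⟨_, _, _, _, _, _, h.swap.step ⟨u, hu, hud⟩ hcc, le_rfl, by omega⟩

theorem Good.grow (g : Good X M γ) (h : Lvl X n p q c d T) :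
    ∃ n' p' q' c' d' T', Lvl X n' p' q' c' d' T' ∧ q ≤ p' ∧ p + q ≤ q' := by
  obtain ⟨t, ⟨ht, htd⟩, _⟩ := h.ex_pd g.P1 0
  obtain ⟨s, hs, hne⟩ := g.P1 p h.hp t
  exact g.grow_aux s t hs (s - t - n + 1).toNat h ht htd hne (by omega)

/-- There are levels both of whose return times are arbitrarily large. -/
theorem Good.large (g : Good X M γ) {a b : A} (hab : a ≠ b) (hX : ∀ z, X z = a ∨ X z = b)
    (k : ℕ) : ∃ n p q c d T, Lvl X n p q c d T ∧ (k : ℤ) ≤ p ∧ (k : ℤ) ≤ q := by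
  induction k with
  | zero => exact ⟨_, _, _, _, _, _, Lvl.start hab hX, by simp, by simp⟩
  | succ k ih =>
    obtain ⟨n, p, q, c, d, T, h, h1, h2⟩ := ih
    obtain ⟨n', p', q', c', d', T', h', h3, h4⟩ := g.grow h
    obtain ⟨n'', p'', q'', c'', d'', T'', h'', h5, h6⟩ := g.grow h'
    have := h.hp
    have := h.hq
    exact ⟨n'', p'', q'', c'', d'', T'', h'', by push_cast; omega, by push_cast; omega⟩

/-! ### The arithmetic of the transitions -/

/-- The transition `(p, q) ↦ (p, p + q)` cannot be made twice in a row, so it is always followed by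
one of the other kind.  The moves become a double move, `(p, q, α) ↦ (p + q, 2 p + q, α + p)`, and a
single move, `(p, q, α) ↦ (q, p + q, α + p)`. -/
theorem Good.trans2 (g : Good X M γ) (h : St X p q α) (hp : M ≤ p) (hq : M ≤ q) :
    (St X (p + q) (2 * p + q) (α + p) ∧ 100 * (2 * p + q) ≤ 151 * (α + p)) ∨
    (St X q (p + q) (α + p) ∧ 100 * (p + q) ≤ 151 * (α + p)) := by
  have hM := g.M2
  rcases g.trans h hp hq with ⟨h1, e1⟩ | h1
  · left
    obtain ⟨_, b1, b2, _⟩ := g.bound h hp hq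
    rcases g.trans h1 hp (by omega) with ⟨h2, e2⟩ | ⟨h2, e2⟩
    · exfalso
      omega
    · rw [show p + (p + q) = 2 * p + q by ring] at h2
      exact ⟨h2, e1⟩
  · exact Or.inr h1

/-- A position from which the double move of `Good.trans2` is made. -/
def Two (X : ℤ → A) (p q α : ℤ) : Prop :=
  St X p q α ∧ St X (p + q) (2 * p + q) (α + p) ∧ 100 * (2 * p + q) ≤ 151 * (α + p)

/-- After a double move there come exactly two single moves and then another double move; the three
moves together are linear in `(p, q, α)`. -/
theorem Good.two_next (g : Good X M γ) (h : Two X p q α) (hp : M ≤ p) (hq : M ≤ q) :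
    Two X (3 * p + 2 * q) (5 * p + 3 * q) (α + 4 * p + 2 * q) := by
  have hM := g.M2
  obtain ⟨h0, h1, e0⟩ := h
  obtain ⟨b0, b1, b2, _⟩ := g.bound h0 hp hq
  obtain ⟨b3, b4, b5, _⟩ := g.bound h1 (by omega) (by omega)
  rcases g.trans2 h1 (by omega) (by omega) with ⟨h2, e2⟩ | ⟨h2, e2⟩
  · exfalso
    obtain ⟨b6, b7, b8, _⟩ := g.bound h2 (by omega) (by omega)
    omega
  obtain ⟨b6, b7, b8, _⟩ := g.bound h2 (by omega) (by omega)
  rcases g.trans2 h2 (by omega) (by omega) with ⟨h3, e3⟩ | ⟨h3, e3⟩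
  · exfalso
    obtain ⟨b9, b10, b11, _⟩ := g.bound h3 (by omega) (by omega)
    omega
  obtain ⟨b9, b10, b11, _⟩ := g.bound h3 (by omega) (by omega)
  rcases g.trans2 h3 (by omega) (by omega) with ⟨h4, e4⟩ | ⟨h4, e4⟩
  · refine ⟨?_, ?_, by omega⟩
    · convert h3 using 1 <;> ring
    · convert h4 using 1 <;> ring
  · exfalso
    obtain ⟨b12, b13, b14, _⟩ := g.bound h4 (by omega) (by omega)
    omega

/-- Four successive single moves are impossible, so a double move occurs. -/
theorem Good.exists_two (g : Good X M γ) (h : St X p q α) (hp : M ≤ p) (hq : M ≤ q) :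
    ∃ p' q' α', M ≤ p' ∧ M ≤ q' ∧ Two X p' q' α' := by
  have hM := g.M2
  rcases g.trans2 h hp hq with ⟨h1, e1⟩ | ⟨h1, e1⟩
  · exact ⟨_, _, _, hp, hq, h, h1, e1⟩
  rcases g.trans2 h1 (by omega) (by omega) with ⟨h2, e2⟩ | ⟨h2, e2⟩
  · exact ⟨_, _, _, by omega, by omega, h1, h2, e2⟩
  rcases g.trans2 h2 (by omega) (by omega) with ⟨h3, e3⟩ | ⟨h3, e3⟩
  · exact ⟨_, _, _, by omega, by omega, h2, h3, e3⟩
  rcases g.trans2 h3 (by omega) (by omega) with ⟨h4, e4⟩ | ⟨h4, e4⟩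
  · exact ⟨_, _, _, by omega, by omega, h3, h4, e4⟩
  exfalso
  obtain ⟨b0, b1, b2, _⟩ := g.bound h (by omega) (by omega)
  obtain ⟨b0, b3, b4, _⟩ := g.bound h1 (by omega) (by omega)
  obtain ⟨b0, b5, b6, _⟩ := g.bound h2 (by omega) (by omega)
  obtain ⟨b0, b7, b8, _⟩ := g.bound h3 (by omega) (by omega)
  obtain ⟨b0, b9, b10, _⟩ := g.bound h4 (by omega) (by omega)
  omega

/-- Iterating the block of moves: `3 α - p - 2 q` is preserved, and `2 q² - 5 p²` only changes
sign, while `q` tends to infinity. -/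
theorem Good.two_iter (g : Good X M γ) (h : Two X p q α) (hp : M ≤ p) (hq : M ≤ q) (k : ℕ) :
    ∃ p' q' α', M ≤ p' ∧ (M + k : ℤ) ≤ q' ∧ Two X p' q' α' ∧
      3 * α' - p' - 2 * q' = 3 * α - p - 2 * q ∧
      |2 * q' ^ 2 - 5 * p' ^ 2| = |2 * q ^ 2 - 5 * p ^ 2| := by
  have hM := g.M2
  induction k with
  | zero => exact ⟨p, q, α, hp, by simpa using hq, h, rfl, rfl⟩
  | succ k ih =>
    obtain ⟨p', q', α', h1, h2, h3, h4, h5⟩ := ih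
    refine ⟨_, _, _, by omega, by push_cast; omega, g.two_next h3 h1 (by omega), by linarith, ?_⟩
    rw [← h5, ← abs_neg]
    congr 1
    ring

/-- By `Good.two_iter`, along the blocks `q / p` tends to `√(5 / 2)` and `α` is `(p + 2 q) / 3` up to
a bounded error.  Hence `(α + p) / q` tends to `4 √10 / 15 + 2 / 3`, which exceeds `γ`, against
`Good.bound`. -/
theorem Good.contradiction (g : Good X M γ) (hγ : γ < Real.sqrt 10 * (4 / 15) + 2 / 3) {a b : A}
    (hab : a ≠ b) (hX : ∀ z, X z = a ∨ X z = b) : False := by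
  have hM := g.M2
  obtain ⟨p, q, α, hp, hq, h⟩ : ∃ p q α, M ≤ p ∧ M ≤ q ∧ Two X p q α := by
    obtain ⟨n, p, q, c, d, T, h, h1, h2⟩ := g.large hab hX M.toNat
    rcases g.enter h (by omega) (by omega) with ⟨α, hα⟩ | ⟨α, hα⟩
    · exact g.exists_two hα (by omega) (by omega)
    · exact g.exists_two hα (by omega) (by omega)
  set F := 3 * α - p - 2 * q with hF
  set K := |2 * q ^ 2 - 5 * p ^ 2| with hK
  set w := Real.sqrt 10 with hw
  have hw2 : w ^ 2 = 10 := Real.sq_sqrt (by norm_num)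
  have hw0 : 0 ≤ w := Real.sqrt_nonneg _
  set ε := w * (4 / 15) + 2 / 3 - γ with hε
  have hε0 : 0 < ε := by linarith
  have hK0 : (0 : ℝ) ≤ (K : ℝ) := by exact_mod_cast abs_nonneg _
  obtain ⟨k, hk⟩ := exists_nat_gt ((|(F : ℝ)| + 2 * K) / ε)
  obtain ⟨p', q', α', h1, h2, h3, h4, h5⟩ := g.two_iter h hp hq k
  obtain ⟨_, _, _, hb⟩ := g.bound h3.1 h1 (by omega)
  have hq' : (k : ℝ) ≤ q' := by exact_mod_cast (by omega : (k : ℤ) ≤ q')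
  have hp' : (1 : ℝ) ≤ p' := by exact_mod_cast (by omega : (1 : ℤ) ≤ p')
  have h4r : 3 * (α' : ℝ) - p' - 2 * q' = F := by exact_mod_cast h4
  have h5r : 2 * (q' : ℝ) ^ 2 - 5 * (p' : ℝ) ^ 2 ≤ K := by
    exact_mod_cast (le_abs_self _).trans h5.le
  push_cast at hb
  rw [div_lt_iff₀ hε0] at hk
  have hεq : (k : ℝ) * ε ≤ q' * ε := mul_le_mul_of_nonneg_right hq' hε0.le
  have hFa := neg_abs_le (F : ℝ)
  -- `w * q - 5 * p` is bounded above along the blocks, because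
  -- `(w * q)² - (5 * p)² = 5 (2 q² - 5 p²)` is bounded.
  have hwq : w * q' ≤ 5 * p' + K := by
    apply le_of_sq_le_sq _ (by linarith)
    nlinarith
  nlinarith
end

/-! ### From subword complexity to a two-sided word -/

section Complexity
variable {A : Type*}

/-- The factor of length `m` of `x` starting at position `k`. -/
def win (x : ℕ → A) (m k : ℕ) : Fin m → A := fun t => x (k + t.1)

theorem win_eq {x y : ℕ → A} {m k l : ℕ} :
    win x m k = win y m l ↔ ∀ i < m, x (k + i) = y (l + i) :=
  ⟨fun h i hi => congrFun h ⟨i, hi⟩, fun h => funext fun t => h t.1 t.2⟩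

theorem pc_eq (x : ℕ → A) (m : ℕ) : pc m x = (Set.range (win x m)).ncard := by
  unfold pc
  congr 1
  ext w
  constructor
  · rintro ⟨k, hk⟩
    exact ⟨k, funext fun t => (hk t).symm⟩
  · rintro ⟨k, rfl⟩
    exact ⟨k, fun t => rfl⟩

/-- If every word in `R` is a factor of length `m` that is continued by two different letters, there
are at least `#R` more factors of length `m + 1` than of length `m`: choose one continuation for
each factor, and a second one for each word in `R`. -/
theorem pc_add_le [Finite A] (x : ℕ → A) (m : ℕ) (R : Set (Fin m → A))
    (hR : ∀ w ∈ R, ∃ k l, win x m k = w ∧ win x m l = w ∧ x (k + m) ≠ x (l + m)) :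
    pc m x + R.ncard ≤ pc (m + 1) x := by
  rw [pc_eq, pc_eq]
  have h1 : ∀ w : Set.range (win x m), ∃ k, win x m k = w.1 := fun w => w.2
  choose f hf using h1
  have h2 : ∀ w : R, ∃ l, win x m l = w.1 ∧
      ∀ h : w.1 ∈ Set.range (win x m), x (f ⟨w.1, h⟩ + m) ≠ x (l + m) := by
    rintro ⟨w, hw⟩
    obtain ⟨k, l, hk, hl, hne⟩ := hR w hw
    have hmem : w ∈ Set.range (win x m) := ⟨k, hk⟩
    by_cases hc : x (f ⟨w, hmem⟩ + m) = x (l + m)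
    · exact ⟨k, hk, fun _ h => hne (h.symm.trans hc)⟩
    · exact ⟨l, hl, fun _ => hc⟩
  choose g hg hg2 using h2
  have res : ∀ {k l}, win x (m + 1) k = win x (m + 1) l →
      win x m k = win x m l ∧ x (k + m) = x (l + m) := fun h =>
    ⟨win_eq.2 fun i hi => win_eq.1 h i (by omega), win_eq.1 h m (by omega)⟩
  let S : Set (Fin (m + 1) → A) := Set.range fun w => win x (m + 1) (f w)
  let S' : Set (Fin (m + 1) → A) := Set.range fun w => win x (m + 1) (g w)
  have i1 : S.ncard = (Set.range (win x m)).ncard := by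
    refine (Nat.card_range_of_injective (f := fun w => win x (m + 1) (f w)) ?_).trans rfl
    intro w w' h
    have := (res h).1
    rw [hf, hf] at this
    exact Subtype.ext this
  have i2 : S'.ncard = R.ncard := by
    refine (Nat.card_range_of_injective (f := fun w => win x (m + 1) (g w)) ?_).trans rfl
    intro w w' h
    have := (res h).1
    rw [hg, hg] at this
    exact Subtype.ext this
  have i3 : Disjoint S S' := by
    rw [Set.disjoint_left]
    rintro _ ⟨w, rfl⟩ ⟨w', h⟩
    have h1 := res h
    have h2 := h1.1
    rw [hg, hf] at h2
    have h3 : w'.1 ∈ Set.range (win x m) := h2 ▸ w.2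
    apply hg2 w' h3
    rw [h1.2]
    congr 3
    exact Subtype.ext h2
  rw [← i1, ← i2, ← Set.ncard_union_eq i3]
  refine Set.ncard_le_ncard ?_ (Set.toFinite _)
  rintro _ (⟨w, rfl⟩ | ⟨w, rfl⟩) <;> exact ⟨_, rfl⟩

/-- The word `x` is not eventually periodic. -/
def Aper (x : ℕ → A) : Prop := ∀ p ≥ 1, ∀ N, ∃ s ≥ N, x (s + p) ≠ x s

/-- A word without right special factor of length `m` is determined by any factor of length `m`, so it
is eventually periodic. -/
theorem Aper.special [Finite A] {x : ℕ → A} (h : Aper x) (m : ℕ) :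
    ∃ k l, win x m k = win x m l ∧ x (k + m) ≠ x (l + m) := by
  by_contra! hcon
  have hdet : ∀ k l, win x m k = win x m l → ∀ i, win x m (k + i) = win x m (l + i) := by
    intro k l hkl i
    induction i with
    | zero => exact hkl
    | succ i ih =>
      rw [win_eq]
      intro j hj
      rcases eq_or_lt_of_le (Nat.succ_le_of_lt hj) with h1 | h1
      · have := hcon _ _ ih
        rwa [show k + (i + 1) + j = k + i + m by omega, show l + (i + 1) + j = l + i + m by omega]
      · have := win_eq.1 ih (j + 1) h1
        rwa [show k + (i + 1) + j = k + i + (j + 1) by omega,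
          show l + (i + 1) + j = l + i + (j + 1) by omega]
  obtain ⟨k, l, hne, hkl⟩ := Finite.exists_ne_map_eq_of_infinite (win x m)
  wlog hlt : k < l generalizing k l
  · exact this l k hne.symm hkl.symm (by omega)
  obtain ⟨s, hs, hsne⟩ := h (l - k) (by omega) (k + m)
  apply hsne
  have := hcon _ _ (hdet k l hkl (s - m - k))
  rw [show k + (s - m - k) + m = s by omega,
    show l + (s - m - k) + m = s + (l - k) by omega] at this
  exact this.symm

/-- The Morse–Hedlund bound. -/
theorem Aper.le_pc [Finite A] {x : ℕ → A} (h : Aper x) (m : ℕ) : m + 1 ≤ pc m x := by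
  induction m with
  | zero =>
    rw [pc_eq]
    exact Nat.succ_le_of_lt ((Set.ncard_pos).2 ⟨_, 0, rfl⟩)
  | succ m ih =>
    obtain ⟨k, l, h1, h2⟩ := h.special m
    have := pc_add_le x m {win x m k} (by
      rintro w rfl
      exact ⟨k, l, rfl, h1.symm, h2⟩)
    rw [Set.ncard_singleton] at this
    omega

theorem IsSturmian.aper {x : ℕ → A} (hx : IsSturmian x) : Aper x := by
  by_contra hcon
  unfold Aper at hcon
  push Not at hcon
  obtain ⟨p, hp, N, hN⟩ := hcon
  have h1 : Set.range (win x (N + p)) ⊆ (fun k => win x (N + p) k) '' (Finset.range (N + p)) := by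
    have : ∀ k, ∃ l < N + p, win x (N + p) k = win x (N + p) l := by
      intro k
      induction k using Nat.strong_induction_on with
      | _ k ih =>
        rcases lt_or_ge k (N + p) with h | h
        · exact ⟨k, h, rfl⟩
        · obtain ⟨l, hl, he⟩ := ih (k - p) (by omega)
          refine ⟨l, hl, he ▸ win_eq.2 fun i _ => ?_⟩
          have := hN (k - p + i) (by omega)
          rwa [show k - p + i + p = k + i by omega] at this
    rintro _ ⟨k, rfl⟩
    obtain ⟨l, hl, he⟩ := this k
    exact ⟨l, by simpa using hl, he.symm⟩
  have h2 := Set.ncard_le_ncard h1 ((Finset.finite_toSet _).image _)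
  have h3 := Set.ncard_image_le (f := fun k => win x (N + p) k) (Finset.finite_toSet (Finset.range (N + p)))
  rw [Set.ncard_coe_finset, Finset.card_range] at h3
  have h4 := hx (N + p) (by omega)
  rw [pc_eq] at h4
  omega

/-- Every prefix of a Sturmian word recurs arbitrarily far on: otherwise some shift of the word would
have fewer than `N + 1` factors of length `N` without being eventually periodic. -/
theorem IsSturmian.recur [Finite A] {x : ℕ → A} (hx : IsSturmian x) (N B : ℕ) :
    ∃ s ≥ B, win x N s = win x N 0 := by
  by_contra! hcon
  have hN : 1 ≤ N := by
    by_contra h0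
    exact hcon B le_rfl (win_eq.2 fun i hi => by omega)
  have hy : Aper fun k => x (B + k) := by
    intro p hp M
    obtain ⟨s, hs, hne⟩ := hx.aper p hp (B + M)
    refine ⟨s - B, by omega, ?_⟩
    simpa only [show B + (s - B + p) = s + p by omega, show B + (s - B) = s by omega] using hne
  have h1 := hy.le_pc N
  have h2 := hx N hN
  rw [pc_eq] at h1 h2
  have h3 : Set.range (win (fun k => x (B + k)) N) ⊂ Set.range (win x N) := by
    rw [Set.ssubset_iff_of_subset]
    · refine ⟨win x N 0, ⟨0, rfl⟩, ?_⟩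
      rintro ⟨k, hk⟩
      apply hcon (B + k) (by omega)
      rw [← hk]
      exact win_eq.2 fun i _ => by rw [add_assoc]
    · rintro _ ⟨k, rfl⟩
      exact ⟨B + k, win_eq.2 fun i _ => by rw [add_assoc]⟩
  have := Set.ncard_lt_ncard h3
  omega

/-- A Sturmian word extends to the left to a two-sided word with the same factors, as a limit along
an ultrafilter of its shifts by positions `s N` at which the prefix of length `N` recurs. -/
theorem IsSturmian.extend [Finite A] {x : ℕ → A} (hx : IsSturmian x) :
    ∃ X : ℤ → A, (∀ k : ℕ, X k = x k) ∧
      ∀ (z : ℤ) (m : ℕ), ∃ k : ℕ, ∀ i < m, X (z + i) = x (k + i) := by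
  choose s hs hw using fun N => hx.recur N N
  have h1 : ∀ z : ℤ, ∃ a, ∀ᶠ N in (hyperfilter ℕ : Filter ℕ), x (s N + z).toNat = a := by
    intro z
    obtain ⟨a, ha⟩ := Ultrafilter.eq_pure_of_finite
      ((hyperfilter ℕ).map fun N => x (s N + z).toNat)
    refine ⟨a, ?_⟩
    have : ({a} : Set A) ∈ (hyperfilter ℕ).map fun N => x (s N + z).toNat := by
      rw [ha]
      exact Ultrafilter.mem_pure.2 rfl
    exact Ultrafilter.mem_map.1 this
  choose X hX using h1
  have hlarge : ∀ m : ℕ, ∀ᶠ N in (hyperfilter ℕ : Filter ℕ), m < N := fun m =>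
    (Nat.hyperfilter_le_atTop) (eventually_gt_atTop m)
  refine ⟨X, fun k => ?_, fun z m => ?_⟩
  · obtain ⟨N, h1, h2⟩ := ((hX k).and (hlarge k)).exists
    rw [← h1, show ((s N : ℤ) + k).toNat = s N + k by omega]
    have := win_eq.1 (hw N) k h2
    rwa [zero_add] at this
  · have h3 : ∀ᶠ N in (hyperfilter ℕ : Filter ℕ), ∀ i ∈ Finset.range m,
        x (s N + (z + (i : ℕ))).toNat = X (z + (i : ℕ)) :=
      (Filter.eventually_all_finset _).2 fun i _ => hX _
    obtain ⟨N, h1, h2⟩ := (h3.and (hlarge z.natAbs)).exists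
    refine ⟨(s N + z).toNat, fun i hi => ?_⟩
    rw [← h1 i (Finset.mem_range.2 hi)]
    have := hs N
    congr 1
    omega

theorem IsSturmian.two_letters {x : ℕ → A} (hx : IsSturmian x) :
    ∃ a b, a ≠ b ∧ ∀ k, x k = a ∨ x k = b := by
  have h := hx 1 le_rfl
  rw [pc_eq] at h
  obtain ⟨u, v, huv, he⟩ := Set.ncard_eq_two.1 h
  refine ⟨u 0, v 0, fun h0 => huv (funext fun i => by rwa [Subsingleton.elim i 0]), fun k => ?_⟩
  have : win x 1 k ∈ ({u, v} : Set _) := he ▸ ⟨k, rfl⟩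
  rcases this with h1 | h1
  · exact Or.inl (congrFun h1 0)
  · exact Or.inr (congrFun h1 0)

/-- Two different right special factors of length `m` would give at least `m + 3` factors of length
`m + 1`. -/
theorem IsSturmian.special_unique [Finite A] {x : ℕ → A} (hx : IsSturmian x) {m k₁ k₂ k₃ k₄ : ℕ}
    (hm : 1 ≤ m) (h12 : win x m k₁ = win x m k₂) (n12 : x (k₁ + m) ≠ x (k₂ + m))
    (h34 : win x m k₃ = win x m k₄) (n34 : x (k₃ + m) ≠ x (k₄ + m)) :
    win x m k₁ = win x m k₃ := by
  by_contra hne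
  have := pc_add_le x m {win x m k₁, win x m k₃} (by
    rintro w (rfl | rfl)
    · exact ⟨k₁, k₂, rfl, h12.symm, n12⟩
    · exact ⟨k₃, k₄, rfl, h34.symm, n34⟩)
  rw [Set.ncard_pair hne, hx m hm, hx (m + 1) (by omega)] at this
  omega

end Complexity

theorem repExp_le_of_sturmian {A : Type*} [Fintype A] (x : ℕ → A) (hx : IsSturmian x) :
    repExp x ≤ ((Real.sqrt 10 - 3 / 2 : ℝ) : EReal) := by
  by_contra! hlt
  obtain ⟨e, he1, he2⟩ := EReal.lt_iff_exists_real_btwn.1 hlt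
  have hev := eventually_lt_of_lt_liminf he2
  have he1 : Real.sqrt 10 - 3 / 2 < e := by exact_mod_cast he1
  obtain ⟨N, hN⟩ := eventually_atTop.1 hev
  obtain ⟨X, hXx, hXw⟩ := hx.extend
  obtain ⟨a, b, hab, hlet⟩ := hx.two_letters
  set w := Real.sqrt 10 with hw
  have hw2 : w ^ 2 = 10 := Real.sq_sqrt (by norm_num)
  have hw0 : 3 < w := by
    rw [hw]
    exact Real.lt_sqrt_of_sq_lt (by norm_num)
  set γ₀ := w * (4 / 15) + 2 / 3 with hγ₀
  have hγ₀le : γ₀ < 151 / 100 := by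
    nlinarith
  have hinv : γ₀ * (w - 5 / 2) = 1 := by
    rw [hγ₀]; nlinarith
  have hγ₀pos : 0 < γ₀ := by positivity
  -- A repetition of length `L` with shift `P` at `j` gives `rc L x ≤ j + P + L`, so `c = e - 1` is a
  -- lower bound for `(j + P) / L` when `L` is large.  The slack between `1 / c` and `γ` pays for the
  -- summand `5` in `Good.rep`.
  set c := e - 1 with hc
  have hcw : w - 5 / 2 < c := by linarith
  have hc0 : 0 < c := by linarith
  have hcinv : 1 / c < γ₀ := by
    rw [div_lt_iff₀ hc0]
    nlinarith
  obtain ⟨γ, hγ1, hγ2⟩ := exists_between hcinv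
  have hγ0 : 0 < γ := lt_trans (by positivity) hγ1
  set δ := γ - 1 / c with hδ
  have hδ0 : 0 < δ := by linarith
  obtain ⟨M₁, hM₁⟩ := exists_nat_gt (5 / δ)
  obtain ⟨M₂, hM₂⟩ := exists_nat_gt ((N + 6 : ℝ) / γ)
  rw [div_lt_iff₀ hδ0] at hM₁
  rw [div_lt_iff₀ hγ0] at hM₂
  have g : Good X ((M₁ + M₂ + 2 : ℕ) : ℤ) γ := by
    refine ⟨by push_cast; omega, by linarith, ?_, ?_, ?_⟩
    · intro P hP B
      obtain ⟨s, hs, hne⟩ := hx.aper P.toNat (by omega) B.toNat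
      refine ⟨s, by omega, ?_⟩
      rw [hXx, show (s : ℤ) + P = ((s + P.toNat : ℕ) : ℤ) by push_cast; omega, hXx]
      exact hne
    · intro m hm s₁ s₂ s₃ s₄ h12 n12 h34 n34 i hi him
      obtain ⟨m, rfl⟩ := Int.eq_ofNat_of_zero_le hm
      obtain ⟨i, rfl⟩ := Int.eq_ofNat_of_zero_le hi
      obtain ⟨k₁, hk₁⟩ := hXw s₁ (m + 1)
      obtain ⟨k₂, hk₂⟩ := hXw s₂ (m + 1)
      obtain ⟨k₃, hk₃⟩ := hXw s₃ (m + 1)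
      obtain ⟨k₄, hk₄⟩ := hXw s₄ (m + 1)
      have := win_eq.1 (hx.special_unique (m := m) (k₁ := k₁) (k₂ := k₂) (k₃ := k₃) (k₄ := k₄)
        (by omega)
        (win_eq.2 fun t ht => by
          rw [← hk₁ t (by omega), ← hk₂ t (by omega)]
          exact h12 t (by omega) (by omega))
        (by rw [← hk₁ m (by omega), ← hk₂ m (by omega)]; exact n12)
        (win_eq.2 fun t ht => by
          rw [← hk₃ t (by omega), ← hk₄ t (by omega)]
          exact h34 t (by omega) (by omega))
        (by rw [← hk₃ m (by omega), ← hk₄ m (by omega)]; exact n34)) i (by omega)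
      rw [hk₁ i (by omega), hk₃ i (by omega), this]
    · intro j P L hP hj hL hper
      obtain ⟨j, rfl⟩ := Int.eq_ofNat_of_zero_le hj
      obtain ⟨P, rfl⟩ := Int.eq_ofNat_of_zero_le (show 0 ≤ P by omega)
      obtain ⟨L, rfl⟩ := Int.eq_ofNat_of_zero_le hL
      have hP' : (M₁ + M₂ + 2 : ℝ) ≤ P := by exact_mod_cast hP
      push_cast
      have hj0 : (0 : ℝ) ≤ j := by positivity
      -- For short repetitions, where `hN` is not available, it is enough that `P` is large.
      rcases lt_or_ge L (N + 1) with hLN | hLN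
      · have h1 : (L : ℝ) ≤ N := by exact_mod_cast (by omega : L ≤ N)
        have h2 : (M₂ : ℝ) ≤ j + P := by
          have : (0 : ℝ) ≤ M₁ := by positivity
          linarith
        nlinarith
      · have h1 := hN L (by omega)
        have hL0 : (0 : ℝ) < L := by exact_mod_cast (by omega : 0 < L)
        have h2 : e < (rc L x : ℝ) / (L : ℝ) := by exact_mod_cast h1
        rw [lt_div_iff₀ hL0] at h2
        have h3 : rc L x ≤ j + P + L := by
          apply Nat.sInf_le
          refine ⟨j, by omega, fun t ht => ?_⟩
          have := hper (j + t) (by omega) (by omega)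
          rw [show j + P + L - L + t = j + t + P by omega, ← hXx, ← hXx]
          push_cast
          exact this.symm
        have h4 : (rc L x : ℝ) ≤ j + P + L := by exact_mod_cast h3
        have h5 : c * L < j + P := by
          rw [hc]; linarith
        have h6 : (L : ℝ) < 1 / c * (j + P) := by
          rw [one_div, inv_mul_eq_div, lt_div_iff₀ hc0]
          linarith
        have h7 : (M₁ : ℝ) ≤ j + P := by
          have : (0 : ℝ) ≤ M₂ := by positivity
          linarith
        have h8 : M₁ * δ ≤ (j + P) * δ := mul_le_mul_of_nonneg_right h7 hδ0.le
        have h9 : γ * (j + P) = 1 / c * (j + P) + (j + P) * δ := by rw [hδ]; ring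
        linarith
  refine g.contradiction hγ2 hab fun z => ?_
  obtain ⟨k, hk⟩ := hXw z 1
  have := hk 0 (by omega)
  simp only [Nat.cast_zero, add_zero] at this
  rw [this]
  exact hlet k
end

section
/- Let θ = (√10 − 2)/3 and ρ = (√10 − 1)/3, and let s′ = s₁′s₂′s₃′… be the infinite word over {0,1} defined by sₙ′ = ⌈(n+1)θ+ρ⌉ − ⌈nθ+ρ⌉ for n ≥ 1 (the Sturmian word of slope θ and intercept ρ). Then rep(s′) = √10 − 3/2. -/
/-!
Put `θ = (√10 - 2)/3`, so the intercept is `θ + 1/3` and the letters of the word are the differences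
of `⌈Kθ + 1/3⌉`.  Factors of length `n` at positions `j` and `j + d` agree if and only if
`⌈(K + d)θ + 1/3⌉ - ⌈Kθ + 1/3⌉` takes the same value `m` for all `K` in `[j + 2, j + n + 2]`
(`match_iff`).  Hence a match says that no point `Kθ + 1/3 - H` of the coset `1/3 + ℤθ + ℤ`, with
`K` in this window, is so close to zero that the shift by `dθ - m` moves it across zero.

Multiplication by the unit `3 - √10 = 1 - 3θ` preserves both the lattice `ℤθ + ℤ` and the coset
`1/3 + ℤθ + ℤ`, so the good approximations in both fall into finitely many families, each the
orbit of one point under the powers of a matrix (`Level`, `levelSeq`).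

*Lower bound.*  If `(qa, pa)` and `(qb, pb)` form a unimodular pair approximating `θ` from opposite
sides, then any shift `dθ - m` with `0 < d < qa + qb` is at least as large as one of `qaθ - pa`,
`qbθ - pb`, on the same side.  So two coset points in the window that are closer to zero, one on
each side, exclude the match (`separation`, `Level.separation`).  Between two consecutive levels
six such estimates suffice to show that the second position `j + d` of a match of length `n` is at
least `(√10 - 5/2) n - O(1)` (`Level.lower`, `match_lower`).

*Upper bound.*  At each level with matrix `[[a, 3e], [2e, a - 4e]]`, the first `12a + 14e - 3`
letters recur at distance `8a + 9e`, the image of the approximation `8θ - 3` (`Level.upper`).  As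
`e / a → θ / 2`, the ratio `(8a + 9e) / (12a + 14e)` tends to `√10 - 5/2` with bounded error in the
numerator (`Level.tight`), so the lower bound is attained along the levels.
-/

open Filter

/-! ### Levels and separation -/

/-- The numbers `⌈Kθ + 1/3⌉`, whose consecutive differences are the letters of the word. -/
noncomputable def ceilSeq (θ : ℝ) (K : ℤ) : ℤ := ⌈(K : ℝ) * θ + 1 / 3⌉

/-- The factors of length `n` of the word at (0-indexed) positions `j` and `j + d` agree,
expressed through `ceilSeq`. -/
def Match (θ : ℝ) (j d n : ℤ) : Prop :=
  ∃ m : ℤ, ∀ K : ℤ, j + 2 ≤ K → K ≤ j + n + 2 → ceilSeq θ (K + d) = ceilSeq θ K + m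

/-- `IsSlope θ` says that `θ` is the positive root of `3θ² + 4θ = 2`, together with a
numerical enclosure. -/
structure IsSlope (θ : ℝ) : Prop where
  quad : 3 * θ ^ 2 + 4 * θ = 2
  lo : 0.387425 < θ
  hi : θ < 0.387426

/-- `Level θ a e` describes a power of the matrix `[[5, 3], [2, 1]]`, namely
`[[a, 3e], [2e, a - 4e]]`.  It represents multiplication by `g = (a - 4e) - 3eθ`, a power of the
unit `3 - √10`, on the lattice of all `qθ - p`, with respect to the coordinates `(q, p)`; by the
congruence condition it also preserves the coset of all `Kθ + 1/3 - H`. -/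
structure Level (θ : ℝ) (a e : ℤ) : Prop where
  det : (a * (a - 4 * e) - 6 * e ^ 2) ^ 2 = 1
  cong : ∃ h : ℤ, a - 4 * e = 3 * h + 1
  lo : 1937 * a ≤ 10000 * e
  hi : 100000 * e ≤ 19373 * a
  large : 191 ≤ a
  g_ne : (a - 4 * e : ℝ) - 3 * e * θ ≠ 0
  g_le : |(a - 4 * e : ℝ) - 3 * e * θ| ≤ 1

theorem Level.base {θ : ℝ} (hθ : IsSlope θ) : Level θ 191 37 := by
  have h1 := hθ.lo
  have h2 := hθ.hi
  refine ⟨by norm_num, ⟨14, by norm_num⟩, by norm_num, by norm_num, by norm_num, ?_, ?_⟩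
  · push_cast
    intro h
    linarith
  · push_cast
    rw [abs_le]
    constructor <;> linarith

theorem Level.step {θ : ℝ} (hθ : IsSlope θ) {a e : ℤ} (L : Level θ a e) :
    Level θ (5 * a + 6 * e) (a + e) := by
  have h1 := hθ.lo
  have h2 := hθ.hi
  have h3 := hθ.quad
  have hl := L.lo
  have hh := L.hi
  have hL := L.large
  have hg : (((5 * a + 6 * e : ℤ) : ℝ) - 4 * ((a + e : ℤ) : ℝ)) - 3 * ((a + e : ℤ) : ℝ) * θ
      = (1 - 3 * θ) * ((a - 4 * e : ℝ) - 3 * e * θ) := by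
    push_cast
    linear_combination (-3 * (e : ℝ)) * h3
  refine ⟨?_, ?_, by linarith, by linarith, by linarith, ?_, ?_⟩
  · rw [← L.det]
    ring
  · obtain ⟨h, hh⟩ := L.cong
    exact ⟨h + 2 * e, by linarith⟩
  · rw [hg]
    refine mul_ne_zero ?_ L.g_ne
    intro h
    linarith
  · rw [hg, abs_mul]
    have : |1 - 3 * θ| ≤ 1 := by
      rw [abs_le]
      constructor <;> linarith
    exact mul_le_one₀ this (abs_nonneg _) L.g_le

/-- If `(qa, pa)`, `(qb, pb)` is a unimodular pair with `qaθ - pa` and `qbθ - pb` of opposite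
signs, then every shift `d < qa + qb` moves points by at least `qaθ - pa` in one direction or by
`qbθ - pb` in the other.  Two points of the coset `Kθ + 1/3 - H`, close to zero on either side,
then detect any such shift. -/
theorem separation {θ : ℝ} {qa pa qb pb K1 H1 K2 H2 d m : ℤ} {g α β ω1 ω2 : ℝ}
    (hdet : (qa * pb - pa * qb) ^ 2 = 1) (hg : g ≠ 0)
    (hqa : 0 ≤ qa) (hqb : 0 ≤ qb)
    (ha : qa * θ - pa = g * α) (hb : qb * θ - pb = g * β)
    (hw1 : K1 * θ + 1 / 3 - H1 = g * ω1) (hw2 : K2 * θ + 1 / 3 - H2 = g * ω2)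
    (hα : 0 < α) (hβ : β < 0) (h1 : -α < ω1) (h1' : ω1 < 0) (h2 : 0 < ω2) (h2' : ω2 < -β)
    (hd : 0 < d) (hd' : d < qa + qb)
    (hK1 : ceilSeq θ (K1 + d) = ceilSeq θ K1 + m)
    (hK2 : ceilSeq θ (K2 + d) = ceilSeq θ K2 + m) : False := by
  -- coordinates of `(d, m)` in the unimodular basis
  obtain ⟨x, y, hx, hy⟩ : ∃ x y : ℤ, d = x * qa + y * qb ∧ m = x * pa + y * pb := by
    refine ⟨(qa * pb - pa * qb) * (d * pb - m * qb), (qa * pb - pa * qb) * (qa * m - pa * d),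
      ?_, ?_⟩
    · linear_combination (-d) * hdet
    · linear_combination (-m) * hdet
  have hδ : (d : ℝ) * θ - m = g * (x * α + y * β) := by
    have hx' : (d : ℝ) = x * qa + y * qb := by exact_mod_cast hx
    have hy' : (m : ℝ) = x * pa + y * pb := by exact_mod_cast hy
    rw [hx', hy']
    linear_combination (x : ℝ) * ha + (y : ℝ) * hb
  have hcase : (1 ≤ x ∧ y ≤ 0) ∨ (x ≤ 0 ∧ 1 ≤ y) := by
    rcases le_or_gt x 0 with hx0 | hx0 <;> rcases le_or_gt y 0 with hy0 | hy0
    · nlinarith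
    · exact Or.inr ⟨hx0, hy0⟩
    · exact Or.inl ⟨hx0, hy0⟩
    · nlinarith
  have e1 : ((K1 + d : ℤ) : ℝ) * θ + 1 / 3 = (H1 + m : ℤ) + g * (ω1 + (x * α + y * β)) := by
    push_cast
    linear_combination hw1 + hδ
  have e1' : (K1 : ℝ) * θ + 1 / 3 = H1 + g * ω1 := by linear_combination hw1
  have e2 : ((K2 + d : ℤ) : ℝ) * θ + 1 / 3 = (H2 + m : ℤ) + g * (ω2 + (x * α + y * β)) := by
    push_cast
    linear_combination hw2 + hδ
  have e2' : (K2 : ℝ) * θ + 1 / 3 = H2 + g * ω2 := by linear_combination hw2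
  unfold ceilSeq at hK1 hK2
  rw [e1, e1', Int.ceil_intCast_add, Int.ceil_intCast_add] at hK1
  rw [e2, e2', Int.ceil_intCast_add, Int.ceil_intCast_add] at hK2
  rcases hcase with ⟨hx1, hy0⟩ | ⟨hx0, hy1⟩
  · have hx1' : (1 : ℝ) ≤ x := by exact_mod_cast hx1
    have hy0' : (y : ℝ) ≤ 0 := by exact_mod_cast hy0
    have hpos : 0 < ω1 + (x * α + y * β) := by nlinarith
    have hc : ⌈g * (ω1 + (x * α + y * β))⌉ = ⌈g * ω1⌉ := by linarith
    rcases lt_or_gt_of_ne hg with hg | hg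
    · have A := Int.ceil_le (z := 0).2
        (by push_cast; nlinarith : g * (ω1 + (x * α + y * β)) ≤ ((0 : ℤ) : ℝ))
      have B := Int.ceil_pos.2 (by nlinarith : 0 < g * ω1)
      omega
    · have A := Int.ceil_le (z := 0).2
        (by push_cast; nlinarith : g * ω1 ≤ ((0 : ℤ) : ℝ))
      have B := Int.ceil_pos.2 (by positivity : 0 < g * (ω1 + (x * α + y * β)))
      omega
  · have hx0' : (x : ℝ) ≤ 0 := by exact_mod_cast hx0
    have hy1' : (1 : ℝ) ≤ y := by exact_mod_cast hy1
    have hneg : ω2 + (x * α + y * β) < 0 := by nlinarith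
    have hc : ⌈g * (ω2 + (x * α + y * β))⌉ = ⌈g * ω2⌉ := by linarith
    rcases lt_or_gt_of_ne hg with hg | hg
    · have A := Int.ceil_le (z := 0).2
        (by push_cast; nlinarith : g * ω2 ≤ ((0 : ℤ) : ℝ))
      have B := Int.ceil_pos.2 (by nlinarith : 0 < g * (ω2 + (x * α + y * β)))
      omega
    · have A := Int.ceil_le (z := 0).2
        (by push_cast; nlinarith : g * (ω2 + (x * α + y * β)) ≤ ((0 : ℤ) : ℝ))
      have B := Int.ceil_pos.2 (by positivity : 0 < g * ω2)
      omega

/-- `separation` applied to the images under the matrix of a level of a fixed configuration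
`(qa, pa)`, `(qb, pb)`, `(K1, H1)`, `(K2, H2)`. -/
theorem Level.separation {θ : ℝ} (hθ : IsSlope θ) {a e : ℤ} (L : Level θ a e)
    (qa pa qb pb K1 H1 K2 H2 : ℤ) (hdet : (qa * pb - pa * qb) ^ 2 = 1)
    (hα : 0 < (qa : ℝ) * θ - pa) (hβ : (qb : ℝ) * θ - pb < 0)
    (h1 : -((qa : ℝ) * θ - pa) < K1 * θ + 1 / 3 - H1) (h1' : (K1 : ℝ) * θ + 1 / 3 - H1 < 0)
    (h2 : 0 < (K2 : ℝ) * θ + 1 / 3 - H2) (h2' : (K2 : ℝ) * θ + 1 / 3 - H2 < -(qb * θ - pb))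
    (hqa : 0 ≤ a * qa + 3 * e * pa) (hqb : 0 ≤ a * qb + 3 * e * pb)
    {j d n : ℤ} (hM : Match θ j d n) (hd : 0 < d)
    (hd' : d < a * qa + 3 * e * pa + (a * qb + 3 * e * pb))
    (hK1 : j + 2 ≤ a * K1 + e * (3 * H1 - 1)) (hK1' : a * K1 + e * (3 * H1 - 1) ≤ j + n + 2)
    (hK2 : j + 2 ≤ a * K2 + e * (3 * H2 - 1)) (hK2' : a * K2 + e * (3 * H2 - 1) ≤ j + n + 2) :
    False := by
  obtain ⟨h, hh⟩ := L.cong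
  have hh' : (a : ℝ) - 4 * e = 3 * h + 1 := by exact_mod_cast hh
  obtain ⟨m, hm⟩ := hM
  have h3 := hθ.quad
  refine _root_.separation (pa := 2 * e * qa + (a - 4 * e) * pa)
    (pb := 2 * e * qb + (a - 4 * e) * pb)
    (H1 := 2 * e * K1 + (a - 4 * e) * H1 - h) (H2 := 2 * e * K2 + (a - 4 * e) * H2 - h)
    ?_ L.g_ne hqa hqb ?_ ?_ ?_ ?_ hα hβ h1 h1' h2 h2' hd hd' (hm _ hK1 hK1') (hm _ hK2 hK2')
  · rw [← mul_one 1]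
    nth_rewrite 1 [← L.det]
    rw [← hdet]
    ring
  · push_cast
    linear_combination (e * qa : ℝ) * h3
  · push_cast
    linear_combination (e * qb : ℝ) * h3
  · push_cast
    linear_combination (e * K1 : ℝ) * h3 - (1 / 3 : ℝ) * hh'
  · push_cast
    linear_combination (e * K2 : ℝ) * h3 - (1 / 3 : ℝ) * hh'

/-! ### Lower bounds for the position of a repetition

Each lemma of this section excludes matches of length at least a threshold ending before a given
position.  The possible starting positions `j` are split into two or three ranges, and on each of
them one configuration of `Level.separation` applies.  The configuration consists of two
neighbouring one-sided best approximations, chosen so that `d < qa + qb`, and of two coset points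
in the window `[j + 2, j + n + 2]`. -/

section claims
variable {θ : ℝ} {a e j d n : ℤ}

theorem claimA (hθ : IsSlope θ) (L : Level θ a e) (hM : Match θ j d n) (hj : 0 ≤ j) (hd : 0 < d)
    (hn : 8 * a + 9 * e ≤ n) : 8 * a + 9 * e ≤ j + d := by
  have h1 := hθ.lo
  have h2 := hθ.hi
  have hl := L.lo
  have hh := L.hi
  have hL := L.large
  by_contra! hP
  rcases le_or_gt j (4 * a + 5 * e - 2) with hj1 | hj1
  · refine L.separation hθ 3 1 5 2 4 2 7 3 ?_ ?_ ?_ ?_ ?_ ?_ ?_ ?_ ?_ hM hd ?_ ?_ ?_ ?_ ?_ <;>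
      norm_num <;> linarith
  · refine L.separation hθ 3 1 2 1 12 5 10 4 ?_ ?_ ?_ ?_ ?_ ?_ ?_ ?_ ?_ hM hd ?_ ?_ ?_ ?_ ?_ <;>
      norm_num <;> linarith

theorem claimB (hθ : IsSlope θ) (L : Level θ a e) (hM : Match θ j d n) (hj : 0 ≤ j) (hd : 0 < d)
    (hn : 12 * a + 14 * e - 2 ≤ n) : 12 * a + 14 * e - 1 ≤ j + d := by
  have h1 := hθ.lo
  have h2 := hθ.hi
  have hl := L.lo
  have hh := L.hi
  have hL := L.large
  by_contra! hP
  rcases le_or_gt j (7 * a + 8 * e - 2) with hj1 | hj1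
  · refine L.separation hθ 8 3 5 2 12 5 7 3 ?_ ?_ ?_ ?_ ?_ ?_ ?_ ?_ ?_ hM hd ?_ ?_ ?_ ?_ ?_ <;>
      norm_num <;> linarith
  · refine L.separation hθ 3 1 2 1 17 7 15 6 ?_ ?_ ?_ ?_ ?_ ?_ ?_ ?_ ?_ hM hd ?_ ?_ ?_ ?_ ?_ <;>
      norm_num <;> linarith

theorem claimC (hθ : IsSlope θ) (L : Level θ a e) (hM : Match θ j d n) (hj : 0 ≤ j) (hd : 0 < d)
    (hn : 18 * a + 21 * e ≤ n) : 18 * a + 21 * e ≤ j + d := by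
  have h1 := hθ.lo
  have h2 := hθ.hi
  have hl := L.lo
  have hh := L.hi
  have hL := L.large
  by_contra! hP
  rcases le_or_gt j (7 * a + 8 * e - 2) with hj1 | hj1
  · refine L.separation hθ 13 5 5 2 12 5 7 3 ?_ ?_ ?_ ?_ ?_ ?_ ?_ ?_ ?_ hM hd ?_ ?_ ?_ ?_ ?_ <;>
      norm_num <;> linarith
  rcases le_or_gt j (17 * a + 20 * e - 2) with hj2 | hj2
  · refine L.separation hθ 8 3 5 2 17 7 25 10 ?_ ?_ ?_ ?_ ?_ ?_ ?_ ?_ ?_ hM hd ?_ ?_ ?_ ?_ ?_ <;>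
      norm_num <;> linarith
  · refine L.separation hθ 1 0 0 1 35 14 35 13 ?_ ?_ ?_ ?_ ?_ ?_ ?_ ?_ ?_ hM hd ?_ ?_ ?_ ?_ ?_ <;>
      norm_num <;> linarith

theorem claimD (hθ : IsSlope θ) (L : Level θ a e) (hM : Match θ j d n) (hj : 0 ≤ j) (hd : 0 < d)
    (hn : 26 * a + 30 * e ≤ n) : 25 * a + 29 * e - 1 ≤ j + d := by
  have h1 := hθ.lo
  have h2 := hθ.hi
  have hl := L.lo
  have hh := L.hi
  have hL := L.large
  by_contra! hP
  rcases le_or_gt j (12 * a + 14 * e - 2) with hj1 | hj1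
  · refine L.separation hθ 13 5 18 7 12 5 25 10 ?_ ?_ ?_ ?_ ?_ ?_ ?_ ?_ ?_ hM hd ?_ ?_ ?_ ?_ ?_ <;>
      norm_num <;> linarith
  · refine L.separation hθ 8 3 5 2 30 12 38 15 ?_ ?_ ?_ ?_ ?_ ?_ ?_ ?_ ?_ hM hd ?_ ?_ ?_ ?_ ?_ <;>
      norm_num <;> linarith

theorem claimE (hθ : IsSlope θ) (L : Level θ a e) (hM : Match θ j d n) (hj : 0 ≤ j) (hd : 0 < d)
    (hn : 36 * a + 42 * e ≤ n) : 31 * a + 36 * e ≤ j + d := by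
  have h1 := hθ.lo
  have h2 := hθ.hi
  have hl := L.lo
  have hh := L.hi
  have hL := L.large
  by_contra! hP
  rcases le_or_gt j (12 * a + 14 * e - 2) with hj1 | hj1
  · refine L.separation hθ 13 5 18 7 12 5 25 10 ?_ ?_ ?_ ?_ ?_ ?_ ?_ ?_ ?_ hM hd ?_ ?_ ?_ ?_ ?_ <;>
      norm_num <;> linarith
  rcases le_or_gt j (25 * a + 29 * e - 2) with hj2 | hj2
  · refine L.separation hθ 13 5 18 7 43 17 25 10 ?_ ?_ ?_ ?_ ?_ ?_ ?_ ?_ ?_ hM hd ?_ ?_ ?_ ?_ ?_ <;>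
      norm_num <;> linarith
  · refine L.separation hθ 3 1 5 2 61 24 56 22 ?_ ?_ ?_ ?_ ?_ ?_ ?_ ?_ ?_ hM hd ?_ ?_ ?_ ?_ ?_ <;>
      norm_num <;> linarith

theorem claimF (hθ : IsSlope θ) (L : Level θ a e) (hM : Match θ j d n) (hj : 0 ≤ j) (hd : 0 < d)
    (hn : 43 * a + 50 * e ≤ n) : 43 * a + 50 * e - 1 ≤ j + d := by
  have h1 := hθ.lo
  have h2 := hθ.hi
  have hl := L.lo
  have hh := L.hi
  have hL := L.large
  by_contra! hP
  rcases le_or_gt j (25 * a + 29 * e - 2) with hj1 | hj1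
  · refine L.separation hθ 31 12 18 7 43 17 25 10 ?_ ?_ ?_ ?_ ?_ ?_ ?_ ?_ ?_ hM hd ?_ ?_ ?_ ?_ ?_ <;>
      norm_num <;> linarith
  · refine L.separation hθ 13 5 5 2 61 24 56 22 ?_ ?_ ?_ ?_ ?_ ?_ ?_ ?_ ?_ hM hd ?_ ?_ ?_ ?_ ?_ <;>
      norm_num <;> linarith

end claims

/-! ### Repetitions across all levels -/

/-- The ratio `e / a` approximates `θ / 2` with an error at most `1 / (2a)`, because
`aθ - 2e = gθ`. -/
theorem Level.conj_le {θ : ℝ} (hθ : IsSlope θ) {a e : ℤ} (L : Level θ a e) :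
    |(2 : ℝ) * e - a * θ| ≤ 1 := by
  have h3 := hθ.quad
  have h1 := hθ.lo
  have h2 := hθ.hi
  have : (2 : ℝ) * e - a * θ = ((a - 4 * e : ℝ) - 3 * e * θ) * (-θ) := by
    linear_combination (-(e : ℝ)) * h3
  rw [this, abs_mul]
  refine mul_le_one₀ L.g_le (abs_nonneg _) ?_
  rw [abs_neg, abs_le]
  constructor <;> linarith

/-- The two quantities governing the extremal repetitions have ratio `3θ - 1/2 = √10 - 5/2`,
up to a bounded error. -/
theorem Level.tight {θ : ℝ} (hθ : IsSlope θ) {a e : ℤ} (L : Level θ a e) :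
    |(8 * a + 9 * e : ℝ) - (3 * θ - 1 / 2) * (12 * a + 14 * e)| ≤ 1 := by
  have h3 := hθ.quad
  have h1 := hθ.lo
  have h2 := hθ.hi
  have : (8 * a + 9 * e : ℝ) - (3 * θ - 1 / 2) * (12 * a + 14 * e)
      = (8 - 21 * θ) * ((2 : ℝ) * e - a * θ) := by
    linear_combination (-7 * (a : ℝ)) * h3
  rw [this, abs_mul]
  refine mul_le_one₀ ?_ (abs_nonneg _) (L.conj_le hθ)
  rw [abs_le]
  constructor <;> linarith

/-- A repetition of length `n` cannot end too early, for `n` in the range from the given level to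
the next one.  Only the subrange `n < 12a + 14e - 2` is asymptotically sharp. -/
theorem Level.lower {θ : ℝ} (hθ : IsSlope θ) {a e : ℤ} (L : Level θ a e) {j d n : ℤ}
    (hM : Match θ j d n) (hj : 0 ≤ j) (hd : 0 < d)
    (hn : 8 * a + 9 * e ≤ n) (hn' : n < 49 * a + 57 * e) :
    (3 * θ - 1 / 2) * n - 10 ≤ j + d := by
  have h1 := hθ.lo
  have h2 := hθ.hi
  have ht := abs_le.1 (L.tight hθ)
  have hl := L.lo
  have hh := L.hi
  have hL := L.large
  have hl' : (1937 : ℝ) * a ≤ 10000 * e := by exact_mod_cast L.lo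
  have hh' : (100000 : ℝ) * e ≤ 19373 * a := by exact_mod_cast L.hi
  have hL' : (191 : ℝ) ≤ a := by exact_mod_cast L.large
  have hn0 : (0 : ℝ) ≤ n := by
    have : 0 ≤ n := by linarith
    exact_mod_cast this
  have hc : (3 * θ - 1 / 2) * n ≤ 0.66228 * n := by nlinarith
  rcases lt_or_ge n (12 * a + 14 * e - 2) with hB | hB
  · have hP : (8 * a + 9 * e : ℝ) ≤ j + d := by exact_mod_cast claimA hθ L hM hj hd hn
    have hB' : (n : ℝ) ≤ 12 * a + 14 * e := by
      have : n ≤ 12 * a + 14 * e := by linarith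
      exact_mod_cast this
    have : (3 * θ - 1 / 2) * n ≤ (3 * θ - 1 / 2) * (12 * a + 14 * e) :=
      mul_le_mul_of_nonneg_left hB' (by linarith)
    linarith [ht.1]
  rcases lt_or_ge n (18 * a + 21 * e) with hC | hC
  · have hP : (12 * a + 14 * e - 1 : ℝ) ≤ j + d := by exact_mod_cast claimB hθ L hM hj hd hB
    have hC' : (n : ℝ) < 18 * a + 21 * e := by exact_mod_cast hC
    linarith
  rcases lt_or_ge n (26 * a + 30 * e) with hD | hD
  · have hP : (18 * a + 21 * e : ℝ) ≤ j + d := by exact_mod_cast claimC hθ L hM hj hd hC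
    have hD' : (n : ℝ) < 26 * a + 30 * e := by exact_mod_cast hD
    linarith
  rcases lt_or_ge n (36 * a + 42 * e) with hE | hE
  · have hP : (25 * a + 29 * e - 1 : ℝ) ≤ j + d := by exact_mod_cast claimD hθ L hM hj hd hD
    have hE' : (n : ℝ) < 36 * a + 42 * e := by exact_mod_cast hE
    linarith
  rcases lt_or_ge n (43 * a + 50 * e) with hF | hF
  · have hP : (31 * a + 36 * e : ℝ) ≤ j + d := by exact_mod_cast claimE hθ L hM hj hd hE
    have hF' : (n : ℝ) < 43 * a + 50 * e := by exact_mod_cast hF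
    linarith
  · have hP : (43 * a + 50 * e - 1 : ℝ) ≤ j + d := by exact_mod_cast claimF hθ L hM hj hd hF
    have hn'' : (n : ℝ) < 49 * a + 57 * e := by exact_mod_cast hn'
    linarith

/-- Each level yields a long repetition starting at the first letter, namely the image of the
vector `(8, 3)`; its length is limited by the image of the coset point `(12, 5)`. -/
theorem Level.upper {θ : ℝ} (hθ : IsSlope θ) {a e : ℤ} (L : Level θ a e) :
    Match θ 0 (8 * a + 9 * e) (12 * a + 14 * e - 3) := by
  have h1 := hθ.lo
  have h2 := hθ.hi
  have h3 := hθ.quad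
  have hl' : (1937 : ℝ) * a ≤ 10000 * e := by exact_mod_cast L.lo
  have hh' : (100000 : ℝ) * e ≤ 19373 * a := by exact_mod_cast L.hi
  have hL' : (191 : ℝ) ≤ a := by exact_mod_cast L.large
  obtain ⟨h, hh⟩ := L.cong
  have hhr : (a : ℝ) - 4 * e = 3 * h + 1 := by exact_mod_cast hh
  set g : ℝ := (a - 4 * e : ℝ) - 3 * e * θ with hg
  refine ⟨3 * a + 4 * e, fun K hK hK' => ?_⟩
  by_contra hne
  have hδ : ((K + (8 * a + 9 * e) : ℤ) : ℝ) * θ + 1 / 3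
      = (K * θ + 1 / 3 + g * (8 * θ - 3)) + (3 * a + 4 * e : ℤ) := by
    rw [hg]
    push_cast
    linear_combination (8 * (e : ℝ)) * h3
  unfold ceilSeq at hne
  rw [hδ, Int.ceil_add_intCast] at hne
  -- a disagreement forces a coset point within `8θ - 3` of zero, on the side given by the sign
  obtain ⟨H, ω, hω, hω1, hω2⟩ : ∃ (H : ℤ) (ω : ℝ),
      (K : ℝ) * θ + 1 / 3 - H = g * ω ∧ -(8 * θ - 3) ≤ ω ∧ ω ≤ 0 := by
    have c1 := Int.le_ceil ((K : ℝ) * θ + 1 / 3)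
    have c2 := Int.ceil_lt_add_one ((K : ℝ) * θ + 1 / 3)
    have c3 := Int.le_ceil ((K : ℝ) * θ + 1 / 3 + g * (8 * θ - 3))
    have c4 := Int.ceil_lt_add_one ((K : ℝ) * θ + 1 / 3 + g * (8 * θ - 3))
    set u := ⌈(K : ℝ) * θ + 1 / 3⌉
    set v := ⌈(K : ℝ) * θ + 1 / 3 + g * (8 * θ - 3)⌉
    have huv : v ≠ u := fun hh => hne (by rw [hh])
    rcases lt_or_gt_of_ne L.g_ne with hg0 | hg0
    · have hvu : (v : ℝ) ≤ u - 1 := by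
        have : v ≤ u := by
          apply Int.ceil_mono
          nlinarith
        have : v ≤ u - 1 := by omega
        exact_mod_cast this
      refine ⟨u - 1, ((K : ℝ) * θ + 1 / 3 - (u - 1 : ℤ)) / g, ?_, ?_, ?_⟩
      · exact (div_mul_cancel₀ _ L.g_ne).symm.trans (mul_comm _ _)
      · rw [le_div_iff_of_neg hg0]
        push_cast
        linarith
      · rw [div_le_iff_of_neg hg0]
        push_cast
        linarith
    · have hvu : (u : ℝ) + 1 ≤ v := by
        have : u ≤ v := by
          apply Int.ceil_mono
          nlinarith
        have : u + 1 ≤ v := by omega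
        exact_mod_cast this
      refine ⟨u, ((K : ℝ) * θ + 1 / 3 - u) / g, ?_, ?_, ?_⟩
      · exact (div_mul_cancel₀ _ L.g_ne).symm.trans (mul_comm _ _)
      · rw [le_div_iff₀ hg0]
        linarith
      · rw [div_le_iff₀ hg0]
        linarith
  -- `(k, l)` is the preimage of the point `(K, H)` under the level, an affine map
  -- of determinant `±1`
  obtain ⟨k, l, hk, hl⟩ : ∃ k l : ℤ, K = a * k + e * (3 * l - 1) ∧
      H = 2 * e * k + (a - 4 * e) * l - h := by
    refine ⟨(a * (a - 4 * e) - 6 * e ^ 2) * ((a - 4 * e) * (K + e) - 3 * e * (H + h)),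
      (a * (a - 4 * e) - 6 * e ^ 2) * (a * (H + h) - 2 * e * (K + e)), ?_, ?_⟩
    · linear_combination (-(K + e)) * L.det
    · linear_combination (-(H + h)) * L.det
  have hkl : (k : ℝ) * θ + 1 / 3 - l = ω := by
    apply mul_left_cancel₀ L.g_ne
    rw [← hg, ← hω, hk, hl, hg]
    push_cast
    linear_combination (-(e * k : ℝ)) * h3 + (1 / 3 : ℝ) * hhr
  have hKr : (K : ℝ) = k * (a + 3 * e * θ) - 3 * e * ω := by
    rw [hk, ← hkl]
    push_cast
    ring
  have hK2 : (2 : ℝ) ≤ K := by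
    have : 2 ≤ K := by linarith
    exact_mod_cast this
  have hK3 : (K : ℝ) ≤ 12 * a + 14 * e - 1 := by
    have : K ≤ 12 * a + 14 * e - 1 := by linarith
    exact_mod_cast this
  have he : (0 : ℝ) < e := by linarith
  have heω : -(e : ℝ) * 0.1 ≤ e * ω := by nlinarith
  have heω' : (e : ℝ) * ω ≤ 0 := by nlinarith
  have heθ : (e : ℝ) * 0.387425 ≤ e * θ := by nlinarith
  have hk0 : 0 ≤ k := by
    by_contra! hneg
    have : (k : ℝ) ≤ -1 := by
      have : k ≤ -1 := by omega
      exact_mod_cast this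
    nlinarith
  have hk12 : k ≤ 12 := by
    by_contra! hgt
    have : (13 : ℝ) ≤ k := by
      have : 13 ≤ k := by omega
      exact_mod_cast this
    nlinarith
  -- `12θ + 1/3 - 5` does lie in the window, but its image `K = 12a + 14e` is just out of range;
  -- for `0 ≤ k < 12` there is no integer `l` at all
  have hω1' : -0.0995 ≤ ω := by linarith
  rcases eq_or_lt_of_le hk12 with rfl | hk12
  · have hl5 : l = 5 := by
      have u1 : (4 : ℝ) < l := by push_cast at hkl; linarith
      have u2 : (l : ℝ) < 6 := by push_cast at hkl; linarith
      have u1 : 4 < l := by exact_mod_cast u1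
      have u2 : l < 6 := by exact_mod_cast u2
      omega
    subst hl5
    linarith
  · have key : ∀ t : ℤ, t < k * θ + 1 / 3 → (k : ℝ) * θ + 1 / 3 + 0.0995 < t + 1 → False := by
      intro t ht ht'
      have u1 : (t : ℝ) < l := by linarith
      have u2 : (l : ℝ) < t + 1 := by linarith
      have u1 : t < l := by exact_mod_cast u1
      have u2 : l < t + 1 := by exact_mod_cast u2
      omega
    refine key ((38743 * k + 33333) / 100000) ?_ ?_ <;> clear key <;> interval_cases k <;>
      norm_num <;> linarith

/-! ### Passage to the limit inferior -/

/-- The pairs `(a, e)` of the third and higher powers of the matrix `[[5, 3], [2, 1]]`. -/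
def levelSeq : ℕ → ℤ × ℤ
  | 0 => (191, 37)
  | i + 1 => (5 * (levelSeq i).1 + 6 * (levelSeq i).2, (levelSeq i).1 + (levelSeq i).2)

theorem levelSeq_level {θ : ℝ} (hθ : IsSlope θ) (i : ℕ) :
    Level θ (levelSeq i).1 (levelSeq i).2 := by
  induction i with
  | zero => exact Level.base hθ
  | succ i ih => exact ih.step hθ

theorem le_levelSeq {θ : ℝ} (hθ : IsSlope θ) (i : ℕ) : (i : ℤ) ≤ (levelSeq i).1 := by
  induction i with
  | zero => norm_num [levelSeq]
  | succ i ih =>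
    have L := levelSeq_level hθ i
    have := L.lo
    have := L.large
    simp only [levelSeq]
    push_cast
    linarith

/-- If factors of length `n` at positions `j` and `j + d` agree, then the second position is at
least `(3θ - 1/2) n - O(1)`. -/
theorem match_lower {θ : ℝ} (hθ : IsSlope θ) {j d n : ℤ} (hn : 2000 ≤ n)
    (hM : Match θ j d n) (hj : 0 ≤ j) (hd : 0 < d) : (3 * θ - 1 / 2) * n - 10 ≤ j + d := by
  have hex : ∃ i : ℕ, n < 8 * (levelSeq i).1 + 9 * (levelSeq i).2 := by
    refine ⟨n.toNat, ?_⟩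
    have h1 := le_levelSeq hθ n.toNat
    have L := levelSeq_level hθ n.toNat
    have := L.lo
    have := L.large
    have : n ≤ n.toNat := Int.self_le_toNat n
    linarith
  classical
  have hs := Nat.find_spec hex
  rcases hi : Nat.find hex with _ | i
  · rw [hi] at hs
    norm_num [levelSeq] at hs
    linarith
  · have hm := Nat.find_min hex (m := i) (by omega)
    rw [hi] at hs
    simp only [levelSeq] at hs
    exact (levelSeq_level hθ i).lower hθ hM hj hd (by linarith) (by linarith)

theorem sturmianCeil_eq (θ : ℝ) (k : ℕ) :
    sturmianCeil θ (θ + 1 / 3) k = ceilSeq θ (k + 3) - ceilSeq θ (k + 2) := by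
  unfold sturmianCeil ceilSeq
  congr 2 <;> push_cast <;> ring

theorem match_iff (θ : ℝ) (j p n : ℕ) :
    (∀ t < n, sturmianCeil θ (θ + 1 / 3) (j + t) = sturmianCeil θ (θ + 1 / 3) (p + t)) ↔
      Match θ j ((p : ℤ) - j) n := by
  constructor
  · intro h
    refine ⟨ceilSeq θ (p + 2) - ceilSeq θ (j + 2), ?_⟩
    have key : ∀ t : ℕ, t ≤ n → ceilSeq θ (p + t + 2) =
        ceilSeq θ (j + t + 2) + (ceilSeq θ (p + 2) - ceilSeq θ (j + 2)) := by
      intro t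
      induction t with
      | zero => intro _; simp
      | succ t ih =>
        intro ht
        have h1 := h t (by omega)
        have h2 := ih (by omega)
        rw [sturmianCeil_eq, sturmianCeil_eq] at h1
        push_cast at h1 ⊢
        rw [show (p : ℤ) + (t + 1) + 2 = p + t + 3 by ring,
          show (j : ℤ) + (t + 1) + 2 = j + t + 3 by ring]
        linarith
    intro K hK hK'
    obtain ⟨t, ht⟩ := Int.eq_ofNat_of_zero_le (sub_nonneg.2 hK)
    have := key t (by omega)
    rw [show K + ((p : ℤ) - j) = p + t + 2 by omega, show K = (j : ℤ) + t + 2 by omega]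
    exact this
  · rintro ⟨m, hm⟩ t ht
    have h1 := hm (j + t + 2) (by omega) (by omega)
    have h2 := hm (j + t + 3) (by omega) (by omega)
    rw [show (j : ℤ) + t + 2 + (p - j) = p + t + 2 by ring] at h1
    rw [show (j : ℤ) + t + 3 + (p - j) = p + t + 3 by ring] at h2
    rw [sturmianCeil_eq, sturmianCeil_eq]
    push_cast
    linarith

/-- For arbitrarily large `n`, the prefix of length `(1 + (3θ - 1/2)) n + O(1)` contains a
repeated factor of length `n`. -/
theorem exists_rep {θ : ℝ} (hθ : IsSlope θ) (M : ℕ) :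
    ∃ n p : ℕ, M ≤ n ∧ 0 < p ∧
      (∀ t < n, sturmianCeil θ (θ + 1 / 3) (0 + t) = sturmianCeil θ (θ + 1 / 3) (p + t)) ∧
      (p : ℝ) ≤ (3 * θ - 1 / 2) * n + 10 := by
  have L := levelSeq_level hθ M
  have hM := le_levelSeq hθ M
  set a := (levelSeq M).1
  set e := (levelSeq M).2
  have h1 := L.lo
  have h2 := L.large
  obtain ⟨n, hn⟩ := Int.eq_ofNat_of_zero_le (show 0 ≤ 12 * a + 14 * e - 3 by linarith)
  obtain ⟨p, hp⟩ := Int.eq_ofNat_of_zero_le (show 0 ≤ 8 * a + 9 * e by linarith)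
  have hup := L.upper hθ
  rw [hn, hp] at hup
  refine ⟨n, p, by omega, by omega, (match_iff θ 0 p n).2 (by simpa using hup), ?_⟩
  have hn' : (12 * a + 14 * e - 3 : ℝ) = n := by exact_mod_cast hn
  have hp' : (8 * a + 9 * e : ℝ) = p := by exact_mod_cast hp
  have ht := (abs_le.1 (L.tight hθ)).2
  have := hθ.lo
  have := hθ.hi
  rw [← hn', ← hp']
  linarith

theorem rc_lower {θ : ℝ} (hθ : IsSlope θ) {n : ℕ} (hn : 2000 ≤ n) :
    (3 * θ + 1 / 2) * n - 10 ≤ rc n (sturmianCeil θ (θ + 1 / 3)) := by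
  obtain ⟨n', p, hn', hp, hx, -⟩ := exists_rep hθ n
  have hne : {m | ∃ j, j + n < m ∧ ∀ t < n, sturmianCeil θ (θ + 1 / 3) (j + t)
      = sturmianCeil θ (θ + 1 / 3) (m - n + t)}.Nonempty := by
    refine ⟨n + p, 0, by omega, fun t ht => ?_⟩
    rw [show n + p - n = p by omega]
    exact hx t (by omega)
  obtain ⟨j, hj, hj'⟩ := Nat.sInf_mem hne
  change j + n < rc n (sturmianCeil θ (θ + 1 / 3)) at hj
  change ∀ t < n, _ = sturmianCeil θ (θ + 1 / 3) (rc n (sturmianCeil θ (θ + 1 / 3)) - n + t) at hj'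
  set r := rc n (sturmianCeil θ (θ + 1 / 3))
  have := match_lower hθ (by exact_mod_cast hn) ((match_iff θ j (r - n) n).1 hj') (by omega)
    (by omega)
  have hr : ((r - n : ℕ) : ℝ) = r - n := Nat.cast_sub (by omega)
  push_cast at this
  rw [hr] at this
  linarith

theorem rc_upper {θ : ℝ} (hθ : IsSlope θ) (M : ℕ) :
    ∃ n ≥ M, (rc n (sturmianCeil θ (θ + 1 / 3)) : ℝ) ≤ (3 * θ + 1 / 2) * n + 10 := by
  obtain ⟨n, p, hn, hp, hx, hpn⟩ := exists_rep hθ M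
  refine ⟨n, hn, ?_⟩
  have : rc n (sturmianCeil θ (θ + 1 / 3)) ≤ n + p := by
    refine Nat.sInf_le ⟨0, by omega, ?_⟩
    rwa [show n + p - n = p by omega]
  have : (rc n (sturmianCeil θ (θ + 1 / 3)) : ℝ) ≤ n + p := by exact_mod_cast this
  linarith

/-- Linear bounds `c n + O(1)` on `rc n x`, below for all large `n` and above for infinitely
many `n`, determine the exponent of repetition. -/
theorem repExp_eq_of_bounds {A : Type*} (x : ℕ → A) (c C : ℝ) (N : ℕ)
    (hlow : ∀ n ≥ N, c * n - C ≤ rc n x) (hupp : ∀ M : ℕ, ∃ n ≥ M, (rc n x : ℝ) ≤ c * n + C) :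
    repExp x = (c : EReal) := by
  have hlim : ∀ D : ℝ, Tendsto (fun n : ℕ => ((c + D / n : ℝ) : EReal)) atTop
      (nhds (c : EReal)) := by
    intro D
    refine (continuous_coe_real_ereal.tendsto c).comp ?_
    simpa using (tendsto_const_div_atTop_nhds_zero_nat D).const_add c
  unfold repExp
  apply le_antisymm
  · refine le_of_forall_gt_imp_ge_of_dense fun b hb => ?_
    refine liminf_le_of_frequently_le' ?_
    have h1 : ∃ᶠ n : ℕ in atTop, (rc n x : ℝ) ≤ c * n + C := frequently_atTop.2 hupp
    refine (h1.and_eventually (((hlim C).eventually_lt_const hb).and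
      (eventually_ge_atTop 1))).mono ?_
    rintro n ⟨h, h', hn⟩
    refine le_trans ?_ h'.le
    have hn' : (0 : ℝ) < n := by exact_mod_cast hn
    rw [EReal.coe_le_coe_iff, div_le_iff₀ hn', add_mul, div_mul_cancel₀ _ hn'.ne']
    exact h
  · rw [← (hlim (-C)).liminf_eq]
    refine liminf_le_liminf ?_
    filter_upwards [eventually_ge_atTop N, eventually_ge_atTop 1] with n hn hn1
    have hn' : (0 : ℝ) < n := by exact_mod_cast hn1
    rw [EReal.coe_le_coe_iff, le_div_iff₀ hn', add_mul, div_mul_cancel₀ _ hn'.ne']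
    linarith [hlow n hn]

theorem repExp_sturmianCeil_sqrt_ten :
    repExp (sturmianCeil ((Real.sqrt 10 - 2) / 3) ((Real.sqrt 10 - 1) / 3)) =
      ((Real.sqrt 10 - 3 / 2 : ℝ) : EReal) := by
  have hs : Real.sqrt 10 ^ 2 = 10 := Real.sq_sqrt (by norm_num)
  have hθ : IsSlope ((Real.sqrt 10 - 2) / 3) := by
    refine ⟨by linear_combination (1 / 3 : ℝ) * hs, ?_, ?_⟩
    · have : 3.162275 < Real.sqrt 10 := Real.lt_sqrt_of_sq_lt (by norm_num)
      linarith
    · have : Real.sqrt 10 < 3.162278 := (Real.sqrt_lt' (by norm_num)).2 (by norm_num)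
      linarith
  rw [show (Real.sqrt 10 - 1) / 3 = (Real.sqrt 10 - 2) / 3 + 1 / 3 by ring,
    show Real.sqrt 10 - 3 / 2 = 3 * ((Real.sqrt 10 - 2) / 3) + 1 / 2 by ring]
  exact repExp_eq_of_bounds _ _ 10 2000 (fun n hn => rc_lower hθ hn) (rc_upper hθ)
end

section
/- Every quasi-Sturmian word s satisfies rep(s) ≤ √10 − 3/2. -/
/-!
Fix a quasi-Sturmian word `x`, and suppose `rep x > √10 - 3/2`, that is, for some
`γ > √10 - 5/2` and all large `n`, a factor of length `n` occurring at `i < j` has `j > γ n`.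

**A two-sided word.** A limit of shifts of `x` gives a two-sided word `X` which extends a suffix
of `x` and all of whose factors recur in `x` arbitrarily far to the right
(`QS.exists_two_sided`).  Since `p(n + 1) = p(n) + 1` for large `n`, it has exactly one right
special factor of each large length, with two extensions (`QS.exists_good`).

**Return words.** Cut `X` at the occurrences of its right special factor of length `N`.  The next
letter decides which of two return words, of lengths `p` and `q`, follows (`QS.Level`).  Exactly
one of the two return words can be followed by itself (`QS.Level.dichotomy`).  If it is the one of
length `p`, the right special factor of length `N + p` has return lengths `p` and `p + q`
(`QS.Level.next`); this is one step of a continued fraction algorithm, which preserves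
`p + q - N`.

**States.** Let `d` be the first nonnegative occurrence of the right special factor.  Recording
the return word of length `a` that starts at `d` and whether the one ending at `d` is the same
(`QS.StE`) or the other one, of length `b` (`QS.StD`), gives a state `(a, b, d)`, and passing to
the next right special factor changes it in one of six explicit ways (`QS.StE.next`,
`QS.StD.next`).  Each state shows an early repetition in `x`, hence, up to bounded errors, an
inequality: `a > γ (a + b + d)` in the first case and `a + d > γ (a + b)` in the second; one of
the transitions shows one more repetition, giving `a + b > γ (a + b + d)`.

**Arithmetic.** With `γ > 0.662` these inequalities leave only two kinds of steps,
`(a, b, d) ↦ (a, a + b, d)` and `(a, b, d) ↦ (b, a + b, a + d)`, and force their succession to be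
eventually periodic: one step of the first kind, three of the second (`QS.reach_cycle`,
`QS.cycle_step`).  Along this cycle the vector `(a, b, d)` tends in direction to the dominant
eigenvector of the matrix of the cycle, on which one of the last inequalities is an equality for
`γ = √10 - 5/2`; as the deviation stays bounded, the inequality fails for every larger `γ`
(`QS.cyc_unbounded`).
-/

open Filter

def IsQuasiSturmian {A : Type*} (x : ℕ → A) : Prop :=
  ∃ k : ℕ, 0 < k ∧ ∃ n₀ : ℕ, ∀ n ≥ n₀, pc n x = n + k

namespace QS

/-! ### Arithmetic of infinite paths of states -/

/-- The effect on `s = (a, b, d)` of one step `(a, b, d) ↦ (a, a + b, d)` followed by three steps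
`(a, b, d) ↦ (b, a + b, a + d)`. -/
def cyc (s : ℤ × ℤ × ℤ) : ℤ × ℤ × ℤ :=
  (3 * s.1 + 2 * s.2.1, 5 * s.1 + 3 * s.2.1, 4 * s.1 + 2 * s.2.1 + s.2.2)

/-- Along an orbit of `cyc` the inequality of a repetition cannot persist with a constant above
`√10 - 5/2`.  The eigenvalues of `cyc` are `3 ± √10` and `1`, with left eigenvectors giving
`b + (√10/2) a`, `b - (√10/2) a` and `3 d - a - 2 b`: the second form contracts, the third is
invariant, and the linear form of the inequality for `√10 - 5/2` is a combination of these two,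
hence bounded. -/
theorem cyc_unbounded (s : ℕ → ℤ × ℤ × ℤ) (hs : ∀ n, s (n + 1) = cyc (s n))
    (ha : 0 < (s 0).1) (hb : 0 < (s 0).2.1) (g : ℝ) (hg : Real.sqrt 10 - 5 / 2 < g)
    (h : ∀ n, g * (7 * (s n).1 + 4 * (s n).2.1 + (s n).2.2 : ℝ) < 5 * (s n).1 + 3 * (s n).2.1)
    (hd : ∀ n, 0 ≤ (s n).2.2) : False := by
  set r := Real.sqrt 10 with hr
  have hr2 : r * r = 10 := Real.mul_self_sqrt (by norm_num)
  have hr3 : 3 < r := by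
    rw [hr]; exact Real.lt_sqrt_of_sq_lt (by norm_num)
  have hr4 : r < 4 := by nlinarith
  have hpos : ∀ n : ℕ, (n : ℤ) + 1 ≤ (s n).1 ∧ 1 ≤ (s n).2.1 := by
    intro n
    induction n with
    | zero => constructor <;> push_cast <;> omega
    | succ n ih =>
      rw [hs n]; simp only [cyc]; push_cast; constructor <;> omega
  have hu : ∀ n : ℕ, |((s n).2.1 : ℝ) - r / 2 * (s n).1| ≤ |((s 0).2.1 : ℝ) - r / 2 * (s 0).1| := by
    intro n
    induction n with
    | zero => exact le_rfl
    | succ n ih =>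
      refine le_trans ?_ ih
      have : (((s (n+1)).2.1 : ℝ) - r / 2 * (s (n+1)).1)
          = (3 - r) * (((s n).2.1 : ℝ) - r / 2 * (s n).1) := by
        rw [hs n]; simp only [cyc]; push_cast; linear_combination (-1/2) * ((s n).1 : ℝ) * hr2
      rw [this, abs_mul]
      have : |3 - r| ≤ 1 := by rw [abs_le]; constructor <;> linarith
      exact mul_le_of_le_one_left (abs_nonneg _) this
  have hv : ∀ n : ℕ, 3 * (s n).2.2 - (s n).1 - 2 * (s n).2.1
      = 3 * (s 0).2.2 - (s 0).1 - 2 * (s 0).2.1 := by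
    intro n
    induction n with
    | zero => rfl
    | succ n ih => rw [← ih, hs n]; simp only [cyc]; ring
  set u0 := |((s 0).2.1 : ℝ) - r / 2 * (s 0).1|
  set v0 := (3 * (s 0).2.2 - (s 0).1 - 2 * (s 0).2.1 : ℤ)
  obtain ⟨n, hn⟩ := exists_nat_gt ((u0 * 3 + |(v0 : ℝ)|) / (g - (r - 5 / 2)))
  rw [div_lt_iff₀ (by linarith)] at hn
  have h1 := h n
  have h2 := hu n
  have h3 : 3 * ((s n).2.2 : ℝ) - (s n).1 - 2 * (s n).2.1 = v0 := by exact_mod_cast hv n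
  obtain ⟨h4, h5⟩ := hpos n
  have h4' : (n : ℝ) + 1 ≤ (s n).1 := by exact_mod_cast h4
  have h5' : (1 : ℝ) ≤ (s n).2.1 := by exact_mod_cast h5
  have h6 : (0 : ℝ) ≤ (s n).2.2 := by exact_mod_cast hd n
  generalize ((s n).1 : ℝ) = a at *
  generalize ((s n).2.1 : ℝ) = b at *
  generalize ((s n).2.2 : ℝ) = d at *
  -- the linear form vanishes on the dominant eigenvector
  have key : 5 * a + 3 * b - (r - 5 / 2) * (7 * a + 4 * b + d)
      = (3 - 14 / 3 * (r - 5 / 2)) * (b - r / 2 * a) - (r - 5 / 2) / 3 * v0 := by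
    rw [← h3]; linear_combination (-7 / 3 * a) * hr2
  have k1 : (3 - 14 / 3 * (r - 5 / 2)) * (b - r / 2 * a) ≤ 3 * u0 := by
    refine le_trans (le_abs_self _) ?_
    rw [abs_mul]
    have : |3 - 14 / 3 * (r - 5 / 2)| ≤ 3 := by
      rw [abs_le]; constructor <;> nlinarith
    exact mul_le_mul this h2 (abs_nonneg _) (by norm_num)
  have k2 : - ((r - 5 / 2) / 3 * v0) ≤ |(v0 : ℝ)| := by
    have := neg_abs_le (v0 : ℝ)
    have := abs_nonneg (v0 : ℝ)
    nlinarith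
  have k3 : (g - (r - 5 / 2)) * n ≤ (g - (r - 5 / 2)) * (7 * a + 4 * b + d) :=
    mul_le_mul_of_nonneg_left (by linarith) (by linarith)
  nlinarith

/-- An infinite path of states, whose steps are `(a, b, d) ↦ (a, a + b, d)` (type `1`) or
`(a, b, d) ↦ (b, a + b, d + a)` (type `4`), contains a step of type `1` followed by three steps of
type `4`.  Two of the inequalities met on the way are recorded. -/
theorem reach_cycle (D : ℤ → ℤ → ℤ → Prop)
    (hD : ∀ a b d, D a b d → 0 < a ∧ 0 < b ∧ 0 ≤ d ∧ d < b ∧ 331 * (a + b) < 500 * (a + d) ∧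
      (D a (a + b) d ∨ (D b (a + b) (d + a) ∧ 331 * (a + b + d) < 500 * (a + b))))
    (h0 : ∃ a b d, D a b d) :
    ∃ a b d, D a b d ∧ D (3 * a + 2 * b) (5 * a + 3 * b) (4 * a + 2 * b + d) ∧
      331 * (2 * a + b) < 500 * (a + d) ∧
      331 * (7 * a + 4 * b + d) < 500 * (5 * a + 3 * b) := by
  -- a step of type `4` cannot be repeated four times, so a step of type `1` occurs
  have h1 : ∃ a b d, D a b d ∧ D a (a + b) d := by
    obtain ⟨a, b, d, h⟩ := h0
    by_contra hcon
    push Not at hcon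
    have e0 := hD _ _ _ h
    rcases e0.2.2.2.2.2 with k | ⟨k, x0⟩
    · exact hcon _ _ _ h k
    have e1 := hD _ _ _ k
    rcases e1.2.2.2.2.2 with l | ⟨l, x1⟩
    · exact hcon _ _ _ k l
    have e2 := hD _ _ _ l
    rcases e2.2.2.2.2.2 with m | ⟨m, x2⟩
    · exact hcon _ _ _ l m
    have e3 := hD _ _ _ m
    rcases e3.2.2.2.2.2 with n | ⟨n, x3⟩
    · exact hcon _ _ _ m n
    have e4 := hD _ _ _ n
    omega
  -- the steps of type `1` cannot go on for ever
  have h2 : ∃ a b d, D a b d ∧ D a (a + b) d ∧ D (a + b) (a + (a + b)) (d + a) ∧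
      331 * (a + (a + b) + d) < 500 * (a + (a + b)) := by
    obtain ⟨a, b, d, h, h'⟩ := h1
    by_contra hcon
    push Not at hcon
    have key : ∀ n : ℕ, ∃ b, (n : ℤ) ≤ b ∧ D a b d ∧ D a (a + b) d := by
      intro n
      induction n with
      | zero => exact ⟨b, by have := (hD _ _ _ h); push_cast; omega, h, h'⟩
      | succ n ih =>
        obtain ⟨b, hb, k, k'⟩ := ih
        have e1 := hD _ _ _ k'
        rcases e1.2.2.2.2.2 with l | ⟨l, x1⟩
        · exact ⟨a + b, by push_cast; omega, k', l⟩
        · exact absurd x1 (not_lt.mpr (hcon _ _ _ k k' l))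
    obtain ⟨b', hb', k, -⟩ := key (2 * (a + d)).toNat
    have := hD _ _ _ k
    omega
  obtain ⟨a, b, d, h, k, l, x1⟩ := h2
  have e0 := hD _ _ _ h
  have e1 := hD _ _ _ k
  have e2 := hD _ _ _ l
  rcases e2.2.2.2.2.2 with m | ⟨m, x2⟩
  · have e3 := hD _ _ _ m
    omega
  have e3 := hD _ _ _ m
  rcases e3.2.2.2.2.2 with n | ⟨n, x3⟩
  swap
  · refine ⟨a, b, d, h, ?_, ?_, ?_⟩
    · convert n using 1 <;> ring
    · linarith [e1.2.2.2.2.1]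
    · linarith
  have e4 := hD _ _ _ n
  rcases e4.2.2.2.2.2 with o | ⟨o, x4⟩
  · have e5 := hD _ _ _ o
    omega
  have e5 := hD _ _ _ o
  rcases e5.2.2.2.2.2 with p | ⟨p, x5⟩
  · have e6 := hD _ _ _ p
    omega
  have e6 := hD _ _ _ p
  rcases e6.2.2.2.2.2 with q | ⟨q, x6⟩
  · have e7 := hD _ _ _ q
    omega
  refine ⟨_, _, _, m, ?_, ?_, ?_⟩
  · convert q using 1 <;> ring
  · linarith [e4.2.2.2.2.1]
  · linarith

/-- After a step of type `1` and three of type `4`, the same four steps must follow again.  Here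
`Y` stands for an additional property known at each step of type `4`. -/
theorem cycle_step (D : ℤ → ℤ → ℤ → Prop) (Y : ℤ → ℤ → ℤ → Prop)
    (hD : ∀ a b d, D a b d → 0 < a ∧ 0 < b ∧ 0 ≤ d ∧ d < b ∧ 331 * (a + b) < 500 * (a + d) ∧
      (D a (a + b) d ∨ (D b (a + b) (d + a) ∧ 331 * (a + b + d) < 500 * (a + b) ∧ Y a b d)))
    (a b d : ℤ) (h : D a b d) (h' : D (3 * a + 2 * b) (5 * a + 3 * b) (4 * a + 2 * b + d))
    (hw : 331 * (2 * a + b) < 500 * (a + d))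
    (hy : 331 * (7 * a + 4 * b + d) < 500 * (5 * a + 3 * b)) :
    ∃ a' b' d', (a', b', d') = cyc (a, b, d) ∧ D a' b' d' ∧
      D (3 * a' + 2 * b') (5 * a' + 3 * b') (4 * a' + 2 * b' + d') ∧
      331 * (2 * a' + b') < 500 * (a' + d') ∧
      331 * (7 * a' + 4 * b' + d') < 500 * (5 * a' + 3 * b') ∧
      Y (2 * a' + b') (3 * a' + 2 * b') (2 * a' + b' + d') := by
  refine ⟨_, _, _, rfl, h', ?_⟩
  have e := hD _ _ _ h
  generalize hA : 3 * a + 2 * b = A at *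
  generalize hB : 5 * a + 3 * b = B at *
  generalize hC : 4 * a + 2 * b + d = C at *
  have e0 := hD _ _ _ h'
  rcases e0.2.2.2.2.2 with k | ⟨k, x0, -⟩
  swap
  · have e1 := hD _ _ _ k
    omega
  have e1 := hD _ _ _ k
  rcases e1.2.2.2.2.2 with l | ⟨l, x1, -⟩
  · have e2 := hD _ _ _ l
    rcases e2.2.2.2.2.2 with m | ⟨m, x2, -⟩
    · have e3 := hD _ _ _ m
      omega
    · have e3 := hD _ _ _ m
      omega
  have e2 := hD _ _ _ l
  rcases e2.2.2.2.2.2 with m | ⟨m, x2, -⟩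
  · have e3 := hD _ _ _ m
    omega
  have e3 := hD _ _ _ m
  rcases e3.2.2.2.2.2 with n | ⟨n, x3, y⟩
  · have e4 := hD _ _ _ n
    omega
  refine ⟨?_, ?_, ?_, ?_⟩
  · convert n using 1 <;> ring
  · linarith [e1.2.2.2.2.1]
  · linarith
  · convert y using 1 <;> ring

/-- There is no infinite path of states satisfying the inequalities with a constant
`g > √10 - 5/2`. -/
theorem no_path (E D : ℤ → ℤ → ℤ → Prop) (g : ℝ) (hg : Real.sqrt 10 - 5 / 2 < g)
    (hE : ∀ a b d, E a b d → 0 < a ∧ 0 < b ∧ 0 ≤ d ∧ d < a ∧ g * (a + b + d : ℝ) < a ∧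
      (E a (a + b) d ∨ D (a + b) a d))
    (hD : ∀ a b d, D a b d → 0 < a ∧ 0 < b ∧ 0 ≤ d ∧ d < b ∧ g * (a + b : ℝ) < a + d ∧
      (D a (a + b) d ∨ E (a + b) a d ∨ E (a + b) b (d + a) ∨
        (D b (a + b) (d + a) ∧ g * (a + b + d : ℝ) < a + b)))
    (h0 : ∃ a b d, E a b d ∨ D a b d) : False := by
  -- `331/500` is a rational lower bound for `√10 - 5/2`, sharp enough for the case analysis
  have hg' : (331 : ℝ) / 500 < g := by
    have : (331 : ℝ) / 500 + 5 / 2 < Real.sqrt 10 := Real.lt_sqrt_of_sq_lt (by norm_num)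
    linarith
  have weaken : ∀ u v : ℤ, 0 ≤ u → g * (u : ℝ) < v → 331 * u < 500 * v := by
    intro u v hu h
    have hu' : (0 : ℝ) ≤ u := by exact_mod_cast hu
    have : (331 : ℝ) * u < 500 * v := by nlinarith
    exact_mod_cast this
  have hE' : ∀ a b d, E a b d → 0 < a ∧ 0 < b ∧ 0 ≤ d ∧ d < a ∧ 331 * (a + b + d) < 500 * a ∧
      (E a (a + b) d ∨ D (a + b) a d) := by
    intro a b d h
    obtain ⟨h1, h2, h3, h4, h5, h6⟩ := hE a b d h
    exact ⟨h1, h2, h3, h4, weaken _ _ (by omega) (by push_cast; exact h5), h6⟩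
  have hD' : ∀ a b d, D a b d → 0 < a ∧ 0 < b ∧ 0 ≤ d ∧ d < b ∧ 331 * (a + b) < 500 * (a + d) ∧
      (D a (a + b) d ∨ E (a + b) a d ∨ E (a + b) b (d + a) ∨
        (D b (a + b) (d + a) ∧ g * (a + b + d : ℝ) < a + b)) := by
    intro a b d h
    obtain ⟨h1, h2, h3, h4, h5, h6⟩ := hD a b d h
    exact ⟨h1, h2, h3, h4, weaken _ _ (by omega) (by push_cast; exact h5), h6⟩
  have hDD : ∀ a b d, D a b d → 0 < a ∧ 0 < b ∧ 0 ≤ d ∧ d < b ∧ 331 * (a + b) < 500 * (a + d) ∧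
      (D a (a + b) d ∨ (D b (a + b) (d + a) ∧ 331 * (a + b + d) < 500 * (a + b) ∧
        g * (a + b + d : ℝ) < a + b)) := by
    intro a b d h
    obtain ⟨h1, h2, h3, h4, h5, h6⟩ := hD' a b d h
    refine ⟨h1, h2, h3, h4, h5, ?_⟩
    rcases h6 with h6 | h6 | h6 | ⟨h6, h7⟩
    · exact Or.inl h6
    · have := hE' _ _ _ h6
      omega
    · have := hE' _ _ _ h6
      omega
    · exact Or.inr ⟨h6, weaken _ _ (by omega) (by push_cast; exact h7), h7⟩
  have h0' : ∃ a b d, D a b d := by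
    obtain ⟨a, b, d, h | h⟩ := h0
    · have h1 := hE' _ _ _ h
      rcases h1.2.2.2.2.2 with k | k
      · have := hE' _ _ _ k
        omega
      · exact ⟨_, _, _, k⟩
    · exact ⟨_, _, _, h⟩
  obtain ⟨a, b, d, i1, i2, i3, i4⟩ := reach_cycle D (fun a b d h => by
    obtain ⟨h1, h2, h3, h4, h5, h6⟩ := hDD a b d h
    exact ⟨h1, h2, h3, h4, h5, h6.imp_right fun h => ⟨h.1, h.2.1⟩⟩) h0'
  have step := cycle_step D (fun a b d => g * (a + b + d : ℝ) < a + b) hDD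
  let s : ℕ → ℤ × ℤ × ℤ := fun n => cyc^[n] (a, b, d)
  have hs : ∀ n, s (n + 1) = cyc (s n) := fun n => Function.iterate_succ_apply' _ _ _
  have inv : ∀ n, ∃ a b d, s n = (a, b, d) ∧ D a b d ∧
      D (3 * a + 2 * b) (5 * a + 3 * b) (4 * a + 2 * b + d) ∧
      331 * (2 * a + b) < 500 * (a + d) ∧ 331 * (7 * a + 4 * b + d) < 500 * (5 * a + 3 * b) ∧
      (0 < n → g * (7 * a + 4 * b + d : ℝ) < 5 * a + 3 * b) := by
    intro n
    induction n with
    | zero => exact ⟨a, b, d, rfl, i1, i2, i3, i4, fun h => absurd h (lt_irrefl _)⟩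
    | succ n ih =>
      obtain ⟨a, b, d, e, j1, j2, j3, j4, -⟩ := ih
      obtain ⟨a', b', d', e', l1, l2, l3, l4, l5⟩ := step a b d j1 j2 j3 j4
      refine ⟨a', b', d', by rw [hs, e, e'], l1, l2, l3, l4, fun _ => ?_⟩
      push_cast at l5
      ring_nf at l5 ⊢
      exact l5
  refine cyc_unbounded (fun n => s (n + 1)) (fun n => hs (n + 1)) ?_ ?_ g hg ?_ ?_
  · obtain ⟨a, b, d, e, j1, -⟩ := inv 1
    simpa [e] using (hDD _ _ _ j1).1
  · obtain ⟨a, b, d, e, j1, -⟩ := inv 1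
    simpa [e] using (hDD _ _ _ j1).2.1
  · intro n
    obtain ⟨a, b, d, e, -, -, -, -, h⟩ := inv (n + 1)
    simpa [e] using h (Nat.succ_pos n)
  · intro n
    obtain ⟨a, b, d, e, j1, -⟩ := inv (n + 1)
    simpa [e] using (hDD _ _ _ j1).2.2.1

/-! ### Return words in a two-sided word -/

variable {A : Type*}

/-- The factors of length `n` of the two-sided word `X` at the positions `i` and `j` agree. -/
def ag (X : ℤ → A) (n i j : ℤ) : Prop := ∀ t, 0 ≤ t → t < n → X (i + t) = X (j + t)

theorem ag.symm {X : ℤ → A} {n i j : ℤ} (h : ag X n i j) : ag X n j i :=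
  fun t h0 h1 => (h t h0 h1).symm

theorem ag.trans {X : ℤ → A} {n i j k : ℤ} (h : ag X n i j) (h' : ag X n j k) : ag X n i k :=
  fun t h0 h1 => (h t h0 h1).trans (h' t h0 h1)

theorem ag.mono {X : ℤ → A} {m n i j : ℤ} (h : ag X n i j) (hm : m ≤ n) : ag X m i j :=
  fun t h0 h1 => h t h0 (by omega)

theorem ag.at {X : ℤ → A} {n i j : ℤ} (h : ag X n i j) (u v : ℤ) (h0 : i ≤ u) (h1 : u < i + n)
    (h2 : u - i = v - j) : X u = X v := by
  have := h (u - i) (by omega) (by omega)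
  rwa [show i + (u - i) = u by ring, show j + (u - i) = v by omega] at this

/-- Agreement restricted to a subwindow. -/
theorem ag.sub {X : ℤ → A} {n i j : ℤ} (h : ag X n i j) (m u v : ℤ) (h0 : i ≤ u)
    (h1 : u + m ≤ i + n) (h2 : u - i = v - j) : ag X m u v := by
  intro t ht0 ht1
  exact h.at _ _ (by omega) (by omega) (by omega)

/-- Gluing of two agreements. -/
theorem ag.add {X : ℤ → A} {m n i j : ℤ} (h : ag X m i j) (h' : ag X n (i + m) (j + m)) :
    ag X (m + n) i j := by
  intro t h0 h1
  by_cases hm : t < m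
  · exact h t h0 hm
  · exact h'.at _ _ (by omega) (by omega) (by omega)

theorem ag.succ {X : ℤ → A} {n i j : ℤ} (h : ag X n i j) (h' : X (i + n) = X (j + n)) :
    ag X (n + 1) i j := by
  intro t h0 h1
  by_cases hm : t < n
  · exact h t h0 hm
  · rwa [show t = n by omega]

/-- The properties of a two-sided word used below: from the length `n₀` on there is at most one
right special factor, and it has two extensions (`uniq`); the word is not periodic on a half-line
(`np`); every factor occurs arbitrarily far to the right (`recur`). -/
structure Good (X : ℤ → A) (n₀ : ℤ) : Prop where
  nonneg : 0 ≤ n₀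
  uniq : ∀ n ≥ n₀, ∀ i j i' j', ag X n i j → X (i + n) ≠ X (j + n) → ag X n i' j' →
    X (i' + n) ≠ X (j' + n) →
    (ag X (n + 1) i i' ∧ ag X (n + 1) j j') ∨ (ag X (n + 1) i j' ∧ ag X (n + 1) j i')
  np : ∀ t c, 0 < c → ∃ k ≥ t, X (k + c) ≠ X k
  recur : ∀ z n B, ∃ t ≥ B, ag X n z t

/-- The occurrences of the right special factor of length `N`, split according to the next letter
into `P` and `Q`.  An occurrence in `P` is followed by the next occurrence after `p` steps, one
in `Q` after `q` steps. -/
structure Level (X : ℤ → A) (n₀ N p q : ℤ) (P Q : Set ℤ) : Prop where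
  hN : n₀ ≤ N
  hp : 0 < p
  hq : 0 < q
  agT : ∀ t t', (t ∈ P ∨ t ∈ Q) → (t' ∈ P ∨ t' ∈ Q) → ag X N t t'
  agP : ∀ t t', t ∈ P → t' ∈ P → ag X (N + p) t t'
  agQ : ∀ t t', t ∈ Q → t' ∈ Q → ag X (N + q) t t'
  sep : ∀ t t', t ∈ P → t' ∈ Q → X (t + N) ≠ X (t' + N)
  close : ∀ t t', (t ∈ P ∨ t ∈ Q) → ag X N t t' → (t' ∈ P ∨ t' ∈ Q)
  nextP : ∀ t ∈ P, t + p ∈ P ∨ t + p ∈ Q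
  nextQ : ∀ t ∈ Q, t + q ∈ P ∨ t + q ∈ Q
  gapP : ∀ t ∈ P, ∀ s, t < s → s < t + p → ¬ (s ∈ P ∨ s ∈ Q)
  gapQ : ∀ t ∈ Q, ∀ s, t < s → s < t + q → ¬ (s ∈ P ∨ s ∈ Q)
  above : ∀ B, ∃ t ≥ B, t ∈ P ∨ t ∈ Q
  below : ∀ B, ∃ t ≤ B, t ∈ P ∨ t ∈ Q
  neP : P.Nonempty
  neQ : Q.Nonempty

theorem Level.swap {X : ℤ → A} {n₀ N p q : ℤ} {P Q : Set ℤ} (L : Level X n₀ N p q P Q) :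
    Level X n₀ N q p Q P where
  hN := L.hN
  hp := L.hq
  hq := L.hp
  agT t t' h h' := L.agT t t' h.symm h'.symm
  agP := L.agQ
  agQ := L.agP
  sep t t' h h' := (L.sep t' t h' h).symm
  close t t' h h' := (L.close t t' h.symm h').symm
  nextP t h := (L.nextQ t h).symm
  nextQ t h := (L.nextP t h).symm
  gapP t h s h1 h2 h3 := L.gapQ t h s h1 h2 h3.symm
  gapQ t h s h1 h2 h3 := L.gapP t h s h1 h2 h3.symm
  above B := (L.above B).imp fun _ h => ⟨h.1, h.2.symm⟩
  below B := (L.below B).imp fun _ h => ⟨h.1, h.2.symm⟩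
  neP := L.neQ
  neQ := L.neP

theorem Level.disj {X : ℤ → A} {n₀ N p q : ℤ} {P Q : Set ℤ} (L : Level X n₀ N p q P Q) {t : ℤ}
    (h : t ∈ P) (h' : t ∈ Q) : False := L.sep t t h h' rfl

/-- A set of positions stable under a translation `c`, along which the word repeats with
period `c`, contradicts aperiodicity. -/
theorem Good.no_period {X : ℤ → A} {n₀ : ℤ} (G : Good X n₀) (S : Set ℤ) (c t₀ : ℤ) (hc : 0 < c)
    (h0 : t₀ ∈ S) (h : ∀ t ∈ S, t + c ∈ S ∧ ag X c t (t + c)) : False := by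
  obtain ⟨k, hk, hne⟩ := G.np t₀ c hc
  have key : ∀ m : ℕ, t₀ + m * c ∈ S := by
    intro m
    induction m with
    | zero => simpa using h0
    | succ m ih =>
      have := (h _ ih).1
      rwa [show t₀ + ((m + 1 : ℕ) : ℤ) * c = t₀ + m * c + c by push_cast; ring]
  have hm := key ((k - t₀) / c).toNat
  rw [Int.toNat_of_nonneg (Int.ediv_nonneg (by omega) hc.le)] at hm
  have e1 := Int.mul_ediv_add_emod (k - t₀) c
  have e2 := Int.emod_nonneg (k - t₀) hc.ne'
  have e3 := Int.emod_lt_of_pos (k - t₀) hc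
  rw [mul_comm] at e1
  exact hne ((h _ hm).2.at k (k + c) (by linarith) (by linarith) (by ring)).symm

theorem Level.exists_PQ {X : ℤ → A} {n₀ N p q : ℤ} {P Q : Set ℤ} (G : Good X n₀)
    (L : Level X n₀ N p q P Q) : ∃ t ∈ P, t + p ∈ Q := by
  by_contra hcon
  push Not at hcon
  obtain ⟨t, ht⟩ := L.neP
  refine G.no_period P p t L.hp ht fun s hs => ?_
  have h1 := (L.nextP s hs).resolve_right (hcon s hs)
  exact ⟨h1, (L.agP _ _ hs h1).mono (by have := L.hN; have := G.nonneg; omega)⟩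

theorem Level.exists_rep {X : ℤ → A} {n₀ N p q : ℤ} {P Q : Set ℤ} (G : Good X n₀)
    (L : Level X n₀ N p q P Q) : (∃ t ∈ P, t + p ∈ P) ∨ (∃ t ∈ Q, t + q ∈ Q) := by
  by_contra hcon
  push Not at hcon
  obtain ⟨t, ht⟩ := L.neP
  have := L.hN
  have := G.nonneg
  have := L.hp
  have := L.hq
  refine G.no_period P (p + q) t (by omega) ht fun s hs => ?_
  have h1 := (L.nextP s hs).resolve_left (hcon.1 s hs)
  have h2 := (L.nextQ _ h1).resolve_right (hcon.2 _ h1)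
  have h3 := (L.nextP _ h2).resolve_left (hcon.1 _ h2)
  rw [← add_assoc]
  refine ⟨h2, ag.add ((L.agP _ _ hs h2).mono (by omega)) ((L.agQ _ _ h1 h3).mono (by omega))⟩

/-- If both return words could be followed by themselves, there would be two different right
special factors of length `N + p`. -/
theorem Level.not_both_of_le {X : ℤ → A} {n₀ N p q : ℤ} {P Q : Set ℤ} (G : Good X n₀)
    (L : Level X n₀ N p q P Q) (hpq : p ≤ q) (h1 : ∃ t ∈ P, t + p ∈ P)
    (h2 : ∃ t ∈ Q, t + q ∈ Q) : False := by
  obtain ⟨t₁, a1, b1⟩ := h1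
  obtain ⟨t₂, a2, b2⟩ := L.exists_PQ G
  obtain ⟨t₃, a3, b3⟩ := L.swap.exists_PQ G
  obtain ⟨t₄, a4, b4⟩ := h2
  have := L.hN
  have := G.nonneg
  have := L.hp
  have := L.hq
  -- the occurrences of the second pair are shifted by `q - p`, to end at the same letter
  have no : ∀ t ∈ Q, ¬ ag X (N + p + 1) t₁ (t + (q - p)) := by
    intro t ht h
    have hT := L.close _ _ (Or.inl a1) (h.mono (by omega))
    rcases hpq.lt_or_eq with hlt | heq
    · exact L.gapQ t ht _ (by omega) (by omega) hT
    · subst heq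
      simp only [sub_self, add_zero] at h
      exact L.sep _ _ a1 ht (h N (by omega) (by omega))
  have key := G.uniq (N + p) (by omega) t₁ t₂ (t₃ + (q - p)) (t₄ + (q - p)) (L.agP _ _ a1 a2)
    (by
      have := L.sep _ _ b1 b2
      rwa [show t₁ + (N + p) = t₁ + p + N by ring, show t₂ + (N + p) = t₂ + p + N by ring])
    ((L.agQ _ _ a3 a4).sub _ _ _ (by omega) (by omega) (by omega))
    (by
      have := L.sep _ _ b3 b4
      rwa [show t₃ + (q - p) + (N + p) = t₃ + q + N by ring,
        show t₄ + (q - p) + (N + p) = t₄ + q + N by ring])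
  rcases key with ⟨k, -⟩ | ⟨k, -⟩
  · exact no _ a3 k
  · exact no _ a4 k

/-- Exactly one of the two return words can be followed by itself. -/
theorem Level.dichotomy {X : ℤ → A} {n₀ N p q : ℤ} {P Q : Set ℤ} (G : Good X n₀)
    (L : Level X n₀ N p q P Q) :
    ((∃ t ∈ P, t + p ∈ P) ∧ ∀ t ∈ Q, t + q ∈ P) ∨ ((∃ t ∈ Q, t + q ∈ Q) ∧ ∀ t ∈ P, t + p ∈ Q) := by
  have nb : ¬ ((∃ t ∈ P, t + p ∈ P) ∧ (∃ t ∈ Q, t + q ∈ Q)) := by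
    rintro ⟨h1, h2⟩
    rcases le_total p q with h | h
    · exact L.not_both_of_le G h h1 h2
    · exact L.swap.not_both_of_le G h h2 h1
  rcases L.exists_rep G with h | h
  · refine Or.inl ⟨h, fun t ht => (L.nextQ t ht).resolve_right fun h' => nb ⟨h, t, ht, h'⟩⟩
  · refine Or.inr ⟨h, fun t ht => (L.nextP t ht).resolve_left fun h' => nb ⟨⟨t, ht, h'⟩, h⟩⟩

/-- The right special factor of length `N + p`, when the return of length `p` is the one that
can be repeated. -/
theorem Level.next {X : ℤ → A} {n₀ N p q : ℤ} {P Q : Set ℤ} (G : Good X n₀)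
    (L : Level X n₀ N p q P Q) (hPP : ∃ t ∈ P, t + p ∈ P) (hQP : ∀ t ∈ Q, t + q ∈ P) :
    Level X n₀ (N + p) p (p + q) {t | t ∈ P ∧ t + p ∈ P} {t | t ∈ P ∧ t + p ∈ Q} := by
  have hN := L.hN
  have h0 := G.nonneg
  have hp := L.hp
  have hq := L.hq
  have hT : ∀ t, (t ∈ {t | t ∈ P ∧ t + p ∈ P} ∨ t ∈ {t | t ∈ P ∧ t + p ∈ Q}) ↔ t ∈ P := by
    intro t
    constructor
    · rintro (h | h) <;> exact h.1
    · intro h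
      exact (L.nextP t h).imp (fun h' => ⟨h, h'⟩) fun h' => ⟨h, h'⟩
  constructor
  · omega
  · exact hp
  · omega
  · intro t t' h h'
    exact L.agP _ _ ((hT t).1 h) ((hT t').1 h')
  · intro t t' h h'
    exact (ag.add ((L.agP _ _ h.1 h'.1).mono (by omega)) (L.agP _ _ h.2 h'.2)).mono
      (m := N + p + p) (n := p + (N + p)) (by omega)
  · intro t t' h h'
    have h1 : ag X q (t + p) (t' + p) := (L.agQ _ _ h.2 h'.2).mono (by omega)
    have h2 := h1.add (L.agP _ _ (hQP _ h.2) (hQP _ h'.2))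
    exact (ag.add ((L.agP _ _ h.1 h'.1).mono (by omega)) h2).mono
      (m := N + p + (p + q)) (n := p + (q + (N + p))) (by omega)
  · intro t t' h h'
    have := L.sep _ _ h.2 h'.2
    rwa [show t + (N + p) = t + p + N by ring, show t' + (N + p) = t' + p + N by ring]
  · intro t t' h h'
    rw [hT] at h ⊢
    refine (L.close t t' (Or.inl h) (h'.mono (by omega))).resolve_right fun hc => ?_
    exact L.sep _ _ h hc (h' N (by omega) (by omega))
  · intro t h
    rw [hT]
    exact h.2
  · intro t h
    rw [hT, ← add_assoc]
    exact hQP _ h.2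
  · intro t h s h1 h2
    rw [hT]
    exact fun hs => L.gapP t h.1 s h1 h2 (Or.inl hs)
  · intro t h s h1 h2
    rw [hT]
    intro hs
    rcases lt_trichotomy s (t + p) with h3 | h3 | h3
    · exact L.gapP t h.1 s h1 h3 (Or.inl hs)
    · exact L.disj hs (h3 ▸ h.2)
    · exact L.gapQ _ h.2 s h3 (by omega) (Or.inl hs)
  · intro B
    obtain ⟨t, ht, h | h⟩ := L.above B
    · exact ⟨t, ht, (hT t).2 h⟩
    · exact ⟨t + q, by omega, (hT _).2 (hQP t h)⟩
  · intro B
    obtain ⟨t, ht, h | h⟩ := L.below (B - q)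
    · exact ⟨t, by omega, (hT t).2 h⟩
    · exact ⟨t + q, by omega, (hT _).2 (hQP t h)⟩
  · exact hPP
  · exact L.exists_PQ G

/-- The occurrence preceding `t` is at distance `p` or `q`, according to its type. -/
theorem Level.pred {X : ℤ → A} {n₀ N p q : ℤ} {P Q : Set ℤ} (L : Level X n₀ N p q P Q) {t : ℤ}
    (ht : t ∈ P ∨ t ∈ Q) : t - p ∈ P ∨ t - q ∈ Q := by
  obtain ⟨s, ⟨hs, hst⟩, hmax⟩ := Int.exists_greatest_of_bdd
    (P := fun s => (s ∈ P ∨ s ∈ Q) ∧ s < t) ⟨t, fun z hz => hz.2.le⟩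
    ((L.below (t - 1)).imp fun s h => ⟨h.2, by omega⟩)
  have hp := L.hp
  have hq := L.hq
  rcases hs with hs | hs
  · left
    have h1 : ¬ t < s + p := fun h => L.gapP s hs t hst h ht
    have h2 : ¬ s + p < t := fun h => by
      have := hmax _ ⟨L.nextP s hs, h⟩
      omega
    rwa [show t - p = s by omega]
  · right
    have h1 : ¬ t < s + q := fun h => L.gapQ s hs t hst h ht
    have h2 : ¬ s + q < t := fun h => by
      have := hmax _ ⟨L.nextQ s hs, h⟩
      omega
    rwa [show t - q = s by omega]

/-! ### States and transitions -/

/-- The first nonnegative occurrence of the right special factor of length `N` is at `d`; the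
return words ending and starting at `d` are equal, of length `a`. -/
def StE (X : ℤ → A) (n₀ N a b d : ℤ) : Prop :=
  ∃ P Q, Level X n₀ N a b P Q ∧ d ∈ P ∧ d - a ∈ P ∧ d < a ∧ 0 ≤ d

/-- The first nonnegative occurrence of the right special factor of length `N` is at `d`; the
return word starting at `d`, of length `a`, differs from the one ending at `d`, of length `b`. -/
def StD (X : ℤ → A) (n₀ N a b d : ℤ) : Prop :=
  ∃ P Q, Level X n₀ N a b P Q ∧ d ∈ P ∧ d - b ∈ Q ∧ d < b ∧ 0 ≤ d

/-- The repetition of period `a` is visible from position `0` on. -/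
theorem StE.basic {X : ℤ → A} {n₀ N a b d : ℤ} (h : StE X n₀ N a b d) :
    n₀ ≤ N ∧ 0 < a ∧ 0 < b ∧ 0 ≤ d ∧ d < a ∧ ag X (N + d) 0 a := by
  obtain ⟨P, Q, L, h1, h2, h3, h4⟩ := h
  exact ⟨L.hN, L.hp, L.hq, h4, h3,
    (L.agP _ _ h2 h1).sub _ _ _ (by omega) (by omega) (by omega)⟩

/-- The occurrence at `d` is repeated after `a` steps. -/
theorem StD.basic {X : ℤ → A} {n₀ N a b d : ℤ} (h : StD X n₀ N a b d) :
    n₀ ≤ N ∧ 0 < a ∧ 0 < b ∧ 0 ≤ d ∧ d < b ∧ ag X N d (d + a) := by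
  obtain ⟨P, Q, L, h1, h2, h3, h4⟩ := h
  exact ⟨L.hN, L.hp, L.hq, h4, h3, L.agT _ _ (Or.inl h1) (L.nextP _ h1)⟩

/-- The state at the next level: the return word of length `a` is the one that can be repeated. -/
theorem StE.next {X : ℤ → A} {n₀ N a b d : ℤ} (G : Good X n₀) (h : StE X n₀ N a b d) :
    StE X n₀ (N + a) a (a + b) d ∨ StD X n₀ (N + a) (a + b) a d := by
  obtain ⟨P, Q, L, h1, h2, h3, h4⟩ := h
  have hPP : ∃ t ∈ P, t + a ∈ P := ⟨d - a, h2, by rwa [sub_add_cancel]⟩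
  rcases L.dichotomy G with ⟨-, hQP⟩ | ⟨-, hPQ⟩
  · have L' := L.next G hPP hQP
    have h2' : d - a ∈ {t | t ∈ P ∧ t + a ∈ P} := ⟨h2, by rwa [sub_add_cancel]⟩
    rcases L.nextP d h1 with h5 | h5
    · exact Or.inl ⟨_, _, L', ⟨h1, h5⟩, h2', h3, h4⟩
    · exact Or.inr ⟨_, _, L'.swap, ⟨h1, h5⟩, h2', h3, h4⟩
  · obtain ⟨t, ht, ht'⟩ := hPP
    exact (L.disj ht' (hPQ t ht)).elim

/-- The state at the next level.  In the first two cases the return word of length `a` is the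
one that can be repeated, in the last two it is the one of length `b`. -/
theorem StD.next {X : ℤ → A} {n₀ N a b d : ℤ} (G : Good X n₀) (h : StD X n₀ N a b d) :
    StD X n₀ (N + a) a (a + b) d ∨ StE X n₀ (N + a) (a + b) a d ∨
      StE X n₀ (N + b) (a + b) b (d + a) ∨
      (StD X n₀ (N + b) b (a + b) (d + a) ∧ ag X (N + d) 0 (a + b)) := by
  obtain ⟨P, Q, L, h1, h2, h3, h4⟩ := h
  have ha := L.hp
  rcases L.dichotomy G with ⟨hPP, hQP⟩ | ⟨hQQ, hPQ⟩
  · have L' := L.next G hPP hQP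
    have h5 : d - (a + b) ∈ {t | t ∈ P ∧ t + a ∈ Q} := by
      rcases L.pred (Or.inr h2) with h6 | h6
      · exact ⟨by rwa [show d - (a + b) = d - b - a by ring],
          by rwa [show d - (a + b) + a = d - b by ring]⟩
      · have := hQP _ h6
        rw [sub_add_cancel] at this
        exact (L.disj this h2).elim
    rcases L.nextP d h1 with h6 | h6
    · exact Or.inl ⟨_, _, L', ⟨h1, h6⟩, h5, by omega, h4⟩
    · exact Or.inr (Or.inl ⟨_, _, L'.swap, ⟨h1, h6⟩, h5, by omega, h4⟩)
  · have L' := L.swap.next G hQQ hPQ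
    rw [add_comm b a] at L'
    have h5 : d + a - (a + b) ∈ {t | t ∈ Q ∧ t + b ∈ P} := by
      rw [show d + a - (a + b) = d - b by ring]
      exact ⟨h2, by rwa [sub_add_cancel]⟩
    have h6 := hPQ d h1
    rcases L.nextQ _ h6 with h7 | h7
    · exact Or.inr (Or.inr (Or.inl ⟨_, _, L'.swap, ⟨h6, h7⟩, h5, by omega, by omega⟩))
    · exact Or.inr (Or.inr (Or.inr ⟨⟨_, _, L', ⟨h6, h7⟩, h5, by omega, by omega⟩,
        (L.agQ _ _ h2 h6).sub _ _ _ (by omega) (by omega) (by omega)⟩))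

/-- Every level gives a state, by looking at the first nonnegative occurrence. -/
theorem Level.state {X : ℤ → A} {n₀ N p q : ℤ} {P Q : Set ℤ} (L : Level X n₀ N p q P Q) :
    ∃ a b d, a + b = p + q ∧ (StE X n₀ N a b d ∨ StD X n₀ N a b d) := by
  obtain ⟨d, ⟨hd, hd0⟩, hmin⟩ := Int.exists_least_of_bdd
    (P := fun s => (s ∈ P ∨ s ∈ Q) ∧ 0 ≤ s) ⟨0, fun z hz => hz.2⟩
    ((L.above 0).imp fun s h => ⟨h.2, h.1⟩)
  have hp := L.hp
  have hq := L.hq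
  have hP : d - p ∈ P → d < p := fun h => by
    by_contra hc
    have := hmin _ ⟨Or.inl h, by omega⟩
    omega
  have hQ : d - q ∈ Q → d < q := fun h => by
    by_contra hc
    have := hmin _ ⟨Or.inr h, by omega⟩
    omega
  rcases hd with h | h
  · refine ⟨p, q, d, rfl, ?_⟩
    rcases L.pred (Or.inl h) with h' | h'
    · exact Or.inl ⟨_, _, L, h, h', hP h', hd0⟩
    · exact Or.inr ⟨_, _, L, h, h', hQ h', hd0⟩
  · refine ⟨q, p, d, add_comm _ _, ?_⟩
    rcases L.pred (Or.inr h) with h' | h'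
    · exact Or.inr ⟨_, _, L.swap, h, h', hP h', hd0⟩
    · exact Or.inl ⟨_, _, L.swap, h, h', hQ h', hd0⟩

/-! ### The initial level -/

/-- Over a finite alphabet an aperiodic word has right special factors of every length. -/
theorem Good.exists_special [Finite A] {X : ℤ → A} {n₀ : ℤ} (G : Good X n₀) :
    ∃ r r', ag X n₀ r r' ∧ X (r + n₀) ≠ X (r' + n₀) := by
  by_contra hcon
  push Not at hcon
  have h0 := G.nonneg
  have ext : ∀ i j, ag X n₀ i j → ∀ m : ℕ, ag X (n₀ + m) i j := by
    intro i j h m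
    induction m with
    | zero => simpa using h
    | succ m ih =>
      push_cast
      rw [← add_assoc]
      refine ih.succ ?_
      have := hcon (i + m) (j + m) (ih.sub _ _ _ (by omega) (by omega) (by omega))
      rwa [show i + (n₀ + m) = i + m + n₀ by ring, show j + (n₀ + m) = j + m + n₀ by ring]
  obtain ⟨i, j, hij, he⟩ := Finite.exists_ne_map_eq_of_infinite
    (fun (i : ℕ) (t : Fin n₀.toNat) => X ((i : ℤ) + (t : ℕ)))
  wlog hlt : i < j generalizing i j
  · exact this j i hij.symm he.symm (by omega)
  have h : ag X n₀ i j := by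
    intro t ht0 ht1
    have := congrFun he ⟨t.toNat, by omega⟩
    simp only [Int.toNat_of_nonneg ht0] at this
    exact this
  obtain ⟨k, hk, hne⟩ := G.np i (j - i) (by omega)
  have := ext i j h (k - i + 1).toNat
  exact hne (this.at k (k + (j - i)) (by omega) (by omega) (by ring)).symm

/-- After an occurrence `t₀` of the right special factor the distance to the next occurrence
is determined by the letter following the factor. -/
theorem Good.return_length {X : ℤ → A} {n₀ r r' : ℤ} (G : Good X n₀) (h : ag X n₀ r r')
    (hne : X (r + n₀) ≠ X (r' + n₀)) (t₀ : ℤ) :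
    ∃ p, 0 < p ∧ (∀ t, ag X (n₀ + 1) t₀ t → ag X (n₀ + p) t₀ t ∧ ag X n₀ r (t + p) ∧
      ∀ s, t < s → s < t + p → ¬ ag X n₀ r s) := by
  obtain ⟨u, ⟨hu, hu0⟩, hmin⟩ := Int.exists_least_of_bdd
    (P := fun s => ag X n₀ r s ∧ t₀ < s) ⟨t₀, fun z hz => hz.2.le⟩
    ((G.recur r n₀ (t₀ + 1)).imp fun s h => ⟨h.2, by omega⟩)
  have key : ∀ t, ag X (n₀ + 1) t₀ t → ∀ m : ℕ, t₀ + m + 1 ≤ u → ag X (n₀ + m + 1) t₀ t := by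
    intro t ht m
    induction m with
    | zero => intro _; simpa using ht
    | succ m ih =>
      intro hm
      push_cast at hm ⊢
      have ih := ih (by omega)
      rw [← add_assoc]
      refine ih.succ ?_
      by_contra hc
      have := G.uniq n₀ le_rfl r r' (t₀ + m + 1) (t + m + 1) h hne
        (ih.sub _ _ _ (by omega) (by omega) (by omega))
        (by rwa [show t₀ + m + 1 + n₀ = t₀ + (n₀ + m + 1) by ring,
          show t + m + 1 + n₀ = t + (n₀ + m + 1) by ring])
      have h2 : ag X n₀ r (t₀ + m + 1) := by
        rcases this with ⟨k, -⟩ | ⟨-, k⟩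
        · exact k.mono (by omega)
        · exact h.trans (k.mono (by omega))
      have := hmin _ ⟨h2, by omega⟩
      omega
  refine ⟨u - t₀, by omega, fun t ht => ?_⟩
  have h1 : ag X (n₀ + (u - t₀)) t₀ t :=
    (key t ht (u - t₀ - 1).toNat (by omega)).mono (by omega)
  refine ⟨h1, hu.trans (h1.sub _ _ _ (by omega) (by omega) (by ring)), fun s hs1 hs2 hs => ?_⟩
  have h3 : ag X n₀ s (s - t + t₀) :=
    (h1.sub n₀ (s - t + t₀) s (by omega) (by omega) (by ring)).symm
  have := hmin _ ⟨hs.trans h3, by omega⟩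
  omega

/-- The occurrences of the right special factor of length `n₀` form a level. -/
theorem Good.exists_level [Finite A] {X : ℤ → A} {n₀ : ℤ} (G : Good X n₀) :
    ∃ p q P Q, Level X n₀ n₀ p q P Q := by
  obtain ⟨r, r', h, hne⟩ := G.exists_special
  obtain ⟨p, hp, hP⟩ := G.return_length h hne r
  obtain ⟨q, hq, hQ⟩ := G.return_length h hne r'
  have h0 := G.nonneg
  have hT : ∀ t, (t ∈ {t | ag X (n₀ + 1) r t} ∨ t ∈ {t | ag X (n₀ + 1) r' t}) ↔ ag X n₀ r t := by
    intro t
    constructor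
    · rintro (k | k)
      · exact ag.mono k (by omega)
      · exact h.trans (ag.mono k (by omega))
    · intro k
      by_cases hx : X (r + n₀) = X (t + n₀)
      · exact Or.inl (k.succ hx)
      · right
        rcases G.uniq n₀ le_rfl r r' r t h hne k hx with ⟨-, k'⟩ | ⟨k', -⟩
        · exact k'
        · exact absurd (k' n₀ h0 (by omega)) hx
  have above : ∀ B, ∃ t ≥ B, ag X n₀ r t := fun B => G.recur r n₀ B
  refine ⟨p, q, {t | ag X (n₀ + 1) r t}, {t | ag X (n₀ + 1) r' t}, ?_⟩
  have nx : ∀ t, ag X n₀ r t → ∃ u, t < u ∧ u ≤ t + p + q ∧ ag X n₀ r u := by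
    intro t ht
    rcases (hT t).2 ht with k | k
    · exact ⟨t + p, by omega, by omega, (hP t k).2.1⟩
    · exact ⟨t + q, by omega, by omega, (hQ t k).2.1⟩
  constructor
  · exact le_rfl
  · exact hp
  · exact hq
  · intro t t' k k'
    rw [hT] at k k'
    exact k.symm.trans k'
  · intro t t' k k'
    exact (hP t k).1.symm.trans (hP t' k').1
  · intro t t' k k'
    exact (hQ t k).1.symm.trans (hQ t' k').1
  · intro t t' k k' hc
    rw [← k n₀ h0 (by omega), ← k' n₀ h0 (by omega)] at hc
    exact hne hc
  · intro t t' k k'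
    rw [hT] at k ⊢
    exact k.trans k'
  · intro t k
    rw [hT]
    exact (hP t k).2.1
  · intro t k
    rw [hT]
    exact (hQ t k).2.1
  · intro t k s h1 h2
    rw [hT]
    exact (hP t k).2.2 s h1 h2
  · intro t k s h1 h2
    rw [hT]
    exact (hQ t k).2.2 s h1 h2
  · intro B
    obtain ⟨t, ht, k⟩ := above B
    exact ⟨t, ht, (hT t).2 k⟩
  · -- a long window without occurrences would recur to the right, where the gaps are bounded
    intro B
    simp only [hT]
    by_contra hcon
    push Not at hcon
    obtain ⟨t₀, -, ht₀⟩ := above 0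
    obtain ⟨s, hs, hag⟩ := G.recur (B - (p + q)) (n₀ + (p + q) + 1) t₀
    obtain ⟨t, ⟨ht, hts⟩, hmax⟩ := Int.exists_greatest_of_bdd
      (P := fun t => ag X n₀ r t ∧ t ≤ s) ⟨s, fun z hz => hz.2⟩ ⟨t₀, ht₀, hs⟩
    obtain ⟨u, hu1, hu2, hu⟩ := nx t ht
    have hus : s < u := by
      by_contra hc
      have := hmax u ⟨hu, by omega⟩
      omega
    refine hcon (u - s + (B - (p + q))) (by omega) (hu.trans ?_)
    exact (hag.sub n₀ (u - s + (B - (p + q))) u (by omega) (by omega) (by ring)).symm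
  · exact ⟨r, fun _ _ _ => rfl⟩
  · exact ⟨r', fun _ _ _ => rfl⟩

/-! ### From repetitions to a contradiction -/

/-- For `γ > √10 - 5/2` it is impossible that, for all large `n`, every repetition of a factor of
length `n`, at positions `0 ≤ i < j`, has `j > γ n`. -/
theorem Good.contra [Finite A] {X : ℤ → A} {n₀ : ℤ} (G : Good X n₀) (γ : ℝ)
    (hγ : Real.sqrt 10 - 5 / 2 < γ) (M : ℤ)
    (H : ∀ n ≥ M, ∀ i j, 0 ≤ i → i < j → ag X n i j → γ * (n : ℝ) < j) : False := by
  obtain ⟨g, hg1, hg2⟩ := exists_between hγ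
  have hg0 : 0 < g := by
    have : (5 : ℝ) / 2 < Real.sqrt 10 := Real.lt_sqrt_of_sq_lt (by norm_num)
    linarith
  obtain ⟨p, q, P, Q, L⟩ := G.exists_level
  obtain ⟨a₀, b₀, d₀, -, h0⟩ := L.state
  -- along a path of states, `a + b - N` is constant
  obtain ⟨K, hK⟩ : ∃ K, n₀ = a₀ + b₀ - K := ⟨a₀ + b₀ - n₀, by ring⟩
  have init : ∀ n : ℕ, ∃ a b d, (n : ℤ) ≤ a + b ∧
      (StE X n₀ (a + b - K) a b d ∨ StD X n₀ (a + b - K) a b d) := by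
    intro n
    induction n with
    | zero =>
      refine ⟨a₀, b₀, d₀, ?_, by rw [← hK]; exact h0⟩
      rcases h0 with h | h <;> have := h.basic <;> push_cast <;> omega
    | succ n ih =>
      push_cast
      obtain ⟨a, b, d, hn, h | h⟩ := ih
      · have hb := h.basic
        rcases h.next G with k | k
        · exact ⟨a, a + b, d, by omega, Or.inl
            (by rwa [show a + (a + b) - K = a + b - K + a by ring])⟩
        · exact ⟨a + b, a, d, by omega, Or.inr
            (by rwa [show a + b + a - K = a + b - K + a by ring])⟩
      · have hb := h.basic
        rcases h.next G with k | k | k | ⟨k, -⟩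
        · exact ⟨a, a + b, d, by omega, Or.inr
            (by rwa [show a + (a + b) - K = a + b - K + a by ring])⟩
        · exact ⟨a + b, a, d, by omega, Or.inl
            (by rwa [show a + b + a - K = a + b - K + a by ring])⟩
        · exact ⟨a + b, b, d + a, by omega, Or.inl
            (by rwa [show a + b + b - K = a + b - K + b by ring])⟩
        · exact ⟨b, a + b, d + a, by omega, Or.inr
            (by rwa [show b + (a + b) - K = a + b - K + b by ring])⟩
  obtain ⟨m, hm⟩ := exists_nat_gt (γ * K / (γ - g))
  rw [div_lt_iff₀ (by linarith)] at hm
  obtain ⟨B, hB⟩ : ∃ B : ℕ, B = m + (M + K).toNat := ⟨_, rfl⟩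
  -- the bound for the lengths `a + b - K + d` gives a slightly weaker one for `a + b + d`
  have weak : ∀ a b d : ℤ, (B : ℤ) ≤ a + b → 0 ≤ d → ∀ v : ℝ,
      γ * ((a + b - K + d : ℤ) : ℝ) < v → g * (a + b + d : ℝ) < v := by
    intro a b d hab hd v hv
    push_cast at hv
    have h1 : (m : ℝ) ≤ a + b := by
      have : (m : ℤ) ≤ a + b := by omega
      exact_mod_cast this
    have h2 : (0 : ℝ) ≤ d := by exact_mod_cast hd
    have h3 : (m : ℝ) * (γ - g) ≤ (a + b + d) * (γ - g) :=
      mul_le_mul_of_nonneg_right (by linarith) (by linarith)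
    nlinarith
  refine no_path (fun a b d => (B : ℤ) ≤ a + b ∧ StE X n₀ (a + b - K) a b d)
    (fun a b d => (B : ℤ) ≤ a + b ∧ StD X n₀ (a + b - K) a b d) g hg1 ?_ ?_ ?_
  · rintro a b d ⟨hab, h⟩
    obtain ⟨-, h1, h2, h3, h4, h5⟩ := h.basic
    refine ⟨h1, h2, h3, h4, ?_, ?_⟩
    · exact weak a b d hab h3 _ (H _ (by omega) _ _ le_rfl h1 h5)
    · rcases h.next G with k | k
      · exact Or.inl ⟨by omega, by rwa [show a + (a + b) - K = a + b - K + a by ring]⟩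
      · exact Or.inr ⟨by omega, by rwa [show a + b + a - K = a + b - K + a by ring]⟩
  · rintro a b d ⟨hab, h⟩
    obtain ⟨-, h1, h2, h3, h4, h5⟩ := h.basic
    refine ⟨h1, h2, h3, h4, ?_, ?_⟩
    · have h6 := H _ (by omega) _ _ h3 (by omega) h5
      have := weak a b 0 hab le_rfl _ (by rw [add_zero]; exact h6)
      push_cast at this
      linarith
    · rcases h.next G with k | k | k | ⟨k, k'⟩
      · exact Or.inl ⟨by omega, by rwa [show a + (a + b) - K = a + b - K + a by ring]⟩
      · exact Or.inr (Or.inl ⟨by omega, by rwa [show a + b + a - K = a + b - K + a by ring]⟩)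
      · exact Or.inr (Or.inr (Or.inl ⟨by omega,
          by rwa [show a + b + b - K = a + b - K + b by ring]⟩))
      · refine Or.inr (Or.inr (Or.inr ⟨⟨by omega,
          by rwa [show b + (a + b) - K = a + b - K + b by ring]⟩, ?_⟩))
        have h6 := H _ (by omega) _ _ le_rfl (by omega) k'
        have := weak a b d hab h3 _ h6
        push_cast at this
        exact this
  · obtain ⟨a, b, d, hab, h | h⟩ := init B
    · exact ⟨a, b, d, Or.inl ⟨hab, h⟩⟩
    · exact ⟨a, b, d, Or.inr ⟨hab, h⟩⟩

/-! ### From one-sided to two-sided words -/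

/-- The factor of length `n` at the position `i` of a one-sided word. -/
def W (x : ℕ → A) (n i : ℕ) : Fin n → A := fun t => x (i + t)

theorem W_eq_iff {x : ℕ → A} {n i j : ℕ} : W x n i = W x n j ↔ ∀ t < n, x (i + t) = x (j + t) :=
  ⟨fun h t ht => congrFun h ⟨t, ht⟩, fun h => funext fun t => h t t.2⟩

theorem W_mono {x : ℕ → A} {m n i j : ℕ} (hmn : m ≤ n) (h : W x n i = W x n j) :
    W x m i = W x m j :=
  W_eq_iff.2 fun t ht => W_eq_iff.1 h t (by omega)

theorem init_W (x : ℕ → A) (n i : ℕ) : Fin.init (W x (n + 1) i) = W x n i := rfl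

theorem pc_eq (x : ℕ → A) (n : ℕ) : pc n x = (Set.range (W x n)).ncard := by
  unfold pc
  congr 1
  ext w
  constructor
  · rintro ⟨k, hk⟩
    exact ⟨k, (funext hk).symm⟩
  · rintro ⟨k, rfl⟩
    exact ⟨k, fun _ => rfl⟩

/-- A quasi-Sturmian word is not eventually periodic, its complexity being unbounded. -/
theorem aperiodic {x : ℕ → A} [Finite A] (hx : IsQuasiSturmian x) (i j : ℕ) (hij : i < j) :
    ∃ k, x (i + k) ≠ x (j + k) := by
  by_contra hcon
  push Not at hcon
  obtain ⟨k, hk, n₀, h⟩ := hx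
  have h1 := h (max n₀ j) (le_max_left _ _)
  rw [pc_eq] at h1
  have h2 : Set.range (W x (max n₀ j)) ⊆ W x (max n₀ j) '' Set.Iio j := by
    rintro _ ⟨m, rfl⟩
    induction m using Nat.strong_induction_on with
    | _ m ih =>
      by_cases hm : m < j
      · exact ⟨m, hm, rfl⟩
      · convert ih (m - (j - i)) (by omega) using 1
        refine W_eq_iff.2 fun t _ => ?_
        have := hcon (m - j + t)
        rw [show m + t = j + (m - j + t) by omega, ← this]
        congr 1
        omega
  have h3 := Set.ncard_le_ncard h2 (Set.toFinite _)
  have h4 := Set.ncard_image_le (f := W x (max n₀ j)) (Set.finite_Iio j)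
  have h5 : (Set.Iio j).ncard = j := by
    rw [← Finset.coe_Iio, Set.ncard_coe_finset, Nat.card_Iio]
  have := le_max_right n₀ j
  omega

/-- A map that loses at most one element identifies at most one pair of points. -/
theorem unique_pair {α β : Type*} {S : Set α} (hS : S.Finite) (f : α → β)
    (h : S.ncard ≤ (f '' S).ncard + 1) {a b a' b' : α} (ha : a ∈ S) (hb : b ∈ S) (ha' : a' ∈ S)
    (hb' : b' ∈ S) (hab : a ≠ b) (hf : f a = f b) (hab' : a' ≠ b') (hf' : f a' = f b') :
    (a = a' ∧ b = b') ∨ (a = b' ∧ b = a') := by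
  have h1 : f '' S ⊆ f '' (S \ {a}) := by
    rintro _ ⟨c, hc, rfl⟩
    by_cases hca : c = a
    · exact ⟨b, ⟨hb, hab.symm⟩, by rw [hca, hf]⟩
    · exact ⟨c, ⟨hc, hca⟩, rfl⟩
  have h2 := Set.ncard_le_ncard h1 ((hS.subset Set.sdiff_subset).image f)
  have h3 := Set.ncard_sdiff_singleton_add_one ha hS
  have h4 := Set.ncard_image_le (f := f) (hS.subset (Set.sdiff_subset (t := {a})))
  have inj : Set.InjOn f (S \ {a}) :=
    Set.injOn_of_ncard_image_eq (by omega) (hS.subset Set.sdiff_subset)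
  by_cases h5 : a' = a
  · subst h5
    exact Or.inl ⟨rfl, inj ⟨hb, hab.symm⟩ ⟨hb', hab'.symm⟩ (by rw [← hf, hf'])⟩
  · by_cases h6 : b' = a
    · subst h6
      exact Or.inr ⟨rfl, inj ⟨hb, hab.symm⟩ ⟨ha', h5⟩ (by rw [← hf, hf'])⟩
    · exact absurd (inj ⟨ha', h5⟩ ⟨hb', h6⟩ hf') hab'

theorem image_init_range (x : ℕ → A) (n : ℕ) :
    (Fin.init : (Fin (n + 1) → A) → Fin n → A) '' Set.range (W x (n + 1)) = Set.range (W x n) := by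
  rw [← Set.range_comp]
  rfl

/-- The factors of length `n` occurring infinitely often. -/
def Rec (x : ℕ → A) (n : ℕ) : Set (Fin n → A) := {w | ∃ᶠ i in atTop, W x n i = w}

theorem eventually_mem_Rec [Finite A] (x : ℕ → A) (n : ℕ) : ∀ᶠ i in atTop, W x n i ∈ Rec x n := by
  have h : ∀ w : Fin n → A, ∀ᶠ i in atTop, W x n i = w → w ∈ Rec x n := by
    intro w
    by_cases hw : w ∈ Rec x n
    · exact Eventually.of_forall fun _ _ => hw
    · have : ∀ᶠ i in atTop, ¬ W x n i = w := not_frequently.1 hw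
      exact this.mono fun i hi h => absurd h hi
  exact (eventually_all.2 h).mono fun i hi => hi _ rfl

theorem image_init_Rec [Finite A] (x : ℕ → A) (n : ℕ) :
    (Fin.init : (Fin (n + 1) → A) → Fin n → A) '' Rec x (n + 1) = Rec x n := by
  ext w
  constructor
  · rintro ⟨v, hv, rfl⟩
    exact Frequently.mono hv fun i hi => by rw [← hi, init_W]
  · intro hw
    obtain ⟨i, hi, hi'⟩ := (Frequently.and_eventually hw (eventually_mem_Rec x (n + 1))).exists
    exact ⟨_, hi', by rw [init_W, hi]⟩

/-- The number of recurrent factors is strictly increasing: otherwise the word would be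
eventually periodic. -/
theorem le_ncard_Rec [Finite A] {x : ℕ → A} (hx : ∀ i j : ℕ, i < j → ∃ k, x (i + k) ≠ x (j + k))
    (n : ℕ) : n ≤ (Rec x n).ncard := by
  induction n with
  | zero => exact Nat.zero_le _
  | succ n ih =>
    by_contra hcon
    have h1 := Set.ncard_image_le (f := (Fin.init : (Fin (n + 1) → A) → Fin n → A))
      (Set.toFinite (Rec x (n + 1)))
    have inj : Set.InjOn (Fin.init : (Fin (n + 1) → A) → Fin n → A) (Rec x (n + 1)) := by
      refine Set.injOn_of_ncard_image_eq ?_ (Set.toFinite _)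
      rw [image_init_Rec] at h1 ⊢
      omega
    obtain ⟨i₀, hi₀⟩ := eventually_atTop.1 (eventually_mem_Rec x (n + 1))
    obtain ⟨i, j, hij, he⟩ := Finite.exists_ne_map_eq_of_infinite (fun i => W x n (i₀ + i))
    wlog hlt : i < j generalizing i j
    · exact this j i hij.symm he.symm (by omega)
    obtain ⟨k, hk⟩ := hx (i₀ + i) (i₀ + j) (by omega)
    have key : ∀ k, W x n (i₀ + i + k) = W x n (i₀ + j + k) ∧
        x (i₀ + i + k) = x (i₀ + j + k) := by
      have up : ∀ k, W x n (i₀ + i + k) = W x n (i₀ + j + k) →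
          W x (n + 1) (i₀ + i + k) = W x (n + 1) (i₀ + j + k) := fun k h =>
        inj (hi₀ _ (by omega)) (hi₀ _ (by omega)) h
      intro k
      induction k with
      | zero => exact ⟨he, W_eq_iff.1 (up 0 he) 0 (by omega)⟩
      | succ k ih =>
        have h2 : W x n (i₀ + i + (k + 1)) = W x n (i₀ + j + (k + 1)) := by
          refine W_eq_iff.2 fun t ht => ?_
          have := W_eq_iff.1 (up k ih.1) (t + 1) (by omega)
          rwa [show i₀ + i + (k + 1) + t = i₀ + i + k + (t + 1) by ring,
            show i₀ + j + (k + 1) + t = i₀ + j + k + (t + 1) by ring]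
        exact ⟨h2, W_eq_iff.1 (up _ h2) 0 (by omega)⟩
    exact hk (key k).2

/-- Some suffix of a quasi-Sturmian word has only recurrent prefixes. -/
theorem exists_recurrent_suffix [Finite A] {x : ℕ → A} (hx : IsQuasiSturmian x) :
    ∃ m, ∀ n, W x n m ∈ Rec x n := by
  have np := aperiodic hx
  obtain ⟨k, -, n₀, h⟩ := hx
  by_contra hcon
  push Not at hcon
  have h1 : ∀ m : Fin (k + 1), ∀ᶠ n in atTop, W x n m ∉ Rec x n := by
    intro m
    obtain ⟨n, hn⟩ := hcon m
    refine eventually_atTop.2 ⟨n, fun n' hn' hc => hn ?_⟩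
    exact Frequently.mono hc fun i hi => W_mono hn' hi
  have h2 : ∀ i j : Fin (k + 1), ∀ᶠ n in atTop, W x n i = W x n j → i = j := by
    intro i j
    by_cases hij : i = j
    · exact Eventually.of_forall fun _ _ => hij
    have : ∃ l, x (i + l) ≠ x (j + l) := by
      rcases lt_or_gt_of_ne hij with hlt | hlt
      · exact np i j hlt
      · exact (np j i hlt).imp fun l hl => hl.symm
    obtain ⟨l, hl⟩ := this
    exact eventually_atTop.2 ⟨l + 1, fun n hn hc => absurd (W_eq_iff.1 hc l (by omega)) hl⟩
  obtain ⟨n, ⟨hn1, hn2⟩, hn3⟩ := (((eventually_all.2 h1).and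
    (eventually_all.2 fun i => eventually_all.2 (h2 i))).and (eventually_ge_atTop n₀)).exists
  have h3 := h n hn3
  rw [pc_eq] at h3
  have hsub : Rec x n ⊆ Set.range (W x n) := fun w hw => by
    obtain ⟨i, hi⟩ := Frequently.exists hw
    exact ⟨i, hi⟩
  have h4 := Set.ncard_sdiff_add_ncard_of_subset hsub (Set.toFinite _)
  have h5 := le_ncard_Rec np n
  -- at most `k` factors of length `n` are not recurrent, but the first `k + 1` prefixes are distinct
  have h6 : (Set.range fun i : Fin (k + 1) => W x n i).ncard = k + 1 := by
    rw [← Set.image_univ, Set.ncard_image_of_injective _ (fun i j hij => hn2 i j hij),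
      Set.ncard_univ, Nat.card_eq_fintype_card, Fintype.card_fin]
  have h7 : (Set.range fun i : Fin (k + 1) => W x n i) ⊆ Set.range (W x n) \ Rec x n := by
    rintro _ ⟨i, rfl⟩
    exact ⟨⟨i, rfl⟩, hn1 i⟩
  have h8 := Set.ncard_le_ncard h7 (Set.toFinite _)
  omega

/-- A two-sided word extending a suffix of `x`, all of whose factors occur in `x` arbitrarily far
to the right: a limit of shifts of `x`. -/
theorem exists_two_sided [Finite A] {x : ℕ → A} (hx : IsQuasiSturmian x) :
    ∃ (X : ℤ → A) (m : ℕ), (∀ k : ℕ, X k = x (m + k)) ∧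
      ∀ (z : ℤ) (L B : ℕ), ∃ s ≥ B, ∀ t < L, X (z + (t : ℕ)) = x (s + t) := by
  obtain ⟨m, hm⟩ := exists_recurrent_suffix hx
  have hτ : ∀ n, ∃ i ≥ m + n, W x n i = W x n m := fun n => frequently_atTop.1 (hm n) (m + n)
  choose τ hτ1 hτ2 using hτ
  -- as the alphabet is finite, the shifts of `x` by `τ n` converge letterwise along an ultrafilter
  have hX : ∀ z : ℤ, ∃ a, ∀ᶠ n in (hyperfilter ℕ : Filter ℕ), x ((τ n : ℤ) + z).toNat = a := by
    intro z
    obtain ⟨a, ha⟩ := Ultrafilter.eq_pure_of_finite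
      ((hyperfilter ℕ).map fun n => x ((τ n : ℤ) + z).toNat)
    refine ⟨a, ?_⟩
    have : {a} ∈ (hyperfilter ℕ).map fun n => x ((τ n : ℤ) + z).toNat := by
      rw [ha]; exact Ultrafilter.mem_pure.2 rfl
    exact this
  choose X hX using hX
  have large : ∀ N : ℕ, ∀ᶠ n in (hyperfilter ℕ : Filter ℕ), N ≤ n := fun N =>
    Nat.hyperfilter_le_atTop (eventually_ge_atTop N)
  refine ⟨X, m, fun k => ?_, fun z L B => ?_⟩
  · obtain ⟨n, h1, h2⟩ := ((hX k).and (large (k + 1))).exists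
    rw [← h1, show ((τ n : ℤ) + k).toNat = τ n + k by omega]
    exact W_eq_iff.1 (hτ2 n) k (by omega)
  · have h : ∀ t : Fin L, ∀ᶠ n in (hyperfilter ℕ : Filter ℕ),
        x ((τ n : ℤ) + (z + (t : ℕ))).toNat = X (z + (t : ℕ)) := fun t => hX _
    obtain ⟨n, h1, h2⟩ := ((eventually_all.2 h).and (large (B + z.natAbs))).exists
    have := hτ1 n
    refine ⟨((τ n : ℤ) + z).toNat, by omega, fun t ht => ?_⟩
    rw [← h1 ⟨t, ht⟩]
    congr 1
    simp only
    omega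

/-- The two-sided word inherits from `x` the uniqueness of right special factors, aperiodicity, and
recurrence to the right. -/
theorem exists_good [Finite A] {x : ℕ → A} (hx : IsQuasiSturmian x) :
    ∃ (X : ℤ → A) (m : ℕ) (n₀ : ℤ), (∀ k : ℕ, X k = x (m + k)) ∧ Good X n₀ := by
  obtain ⟨X, m, h1, h2⟩ := exists_two_sided hx
  have np := aperiodic hx
  obtain ⟨k, -, n₀, h⟩ := hx
  refine ⟨X, m, n₀, h1, ⟨by omega, ?_, ?_, ?_⟩⟩
  · intro n hn i j i' j' e ne e' ne'
    lift n to ℕ using by omega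
    have hn : n₀ ≤ n := by omega
    obtain ⟨u, -, hu⟩ := h2 i (n + 1) 0
    obtain ⟨v, -, hv⟩ := h2 j (n + 1) 0
    obtain ⟨u', -, hu'⟩ := h2 i' (n + 1) 0
    obtain ⟨v', -, hv'⟩ := h2 j' (n + 1) 0
    have toW : ∀ {i j : ℤ} {u v : ℕ}, (∀ t < n + 1, X (i + (t : ℕ)) = x (u + t)) →
        (∀ t < n + 1, X (j + (t : ℕ)) = x (v + t)) → ag X n i j → W x n u = W x n v := by
      intro i j u v hu hv e
      refine W_eq_iff.2 fun t ht => ?_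
      rw [← hu t (by omega), ← hv t (by omega)]
      exact e t (by omega) (by omega)
    have ofW : ∀ {i j : ℤ} {u v : ℕ}, (∀ t < n + 1, X (i + (t : ℕ)) = x (u + t)) →
        (∀ t < n + 1, X (j + (t : ℕ)) = x (v + t)) → W x (n + 1) u = W x (n + 1) v →
        ag X (n + 1) i j := by
      intro i j u v hu hv e t ht0 ht1
      lift t to ℕ using ht0
      rw [hu t (by omega), hv t (by omega)]
      exact W_eq_iff.1 e t (by omega)
    have neW : ∀ {i j : ℤ} {u v : ℕ}, (∀ t < n + 1, X (i + (t : ℕ)) = x (u + t)) →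
        (∀ t < n + 1, X (j + (t : ℕ)) = x (v + t)) → X (i + n) ≠ X (j + n) →
        W x (n + 1) u ≠ W x (n + 1) v := by
      intro i j u v hu hv e hc
      rw [hu n (by omega), hv n (by omega)] at e
      exact e (W_eq_iff.1 hc n (by omega))
    have card : (Set.range (W x (n + 1))).ncard ≤
        ((Fin.init : (Fin (n + 1) → A) → Fin n → A) '' Set.range (W x (n + 1))).ncard + 1 := by
      rw [image_init_range, ← pc_eq, ← pc_eq, h n hn, h (n + 1) (by omega)]
      omega
    have := unique_pair (Set.toFinite _) _ card ⟨u, rfl⟩ ⟨v, rfl⟩ ⟨u', rfl⟩ ⟨v', rfl⟩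
      (neW hu hv ne) (toW hu hv e) (neW hu' hv' ne') (toW hu' hv' e')
    exact this.imp (fun h => ⟨ofW hu hu' h.1, ofW hv hv' h.2⟩)
      fun h => ⟨ofW hu hv' h.1, ofW hv hu' h.2⟩
  · intro t c hc
    obtain ⟨l, hl⟩ := np (m + t.toNat) (m + t.toNat + c.toNat) (by omega)
    refine ⟨(t.toNat + l : ℕ), by omega, ?_⟩
    rw [show ((t.toNat + l : ℕ) : ℤ) + c = ((t.toNat + l + c.toNat : ℕ) : ℤ) by omega, h1, h1]
    intro hcon
    apply hl
    rw [show m + t.toNat + l = m + (t.toNat + l) by ring, ← hcon]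
    congr 1
    ring
  · intro z n B
    obtain ⟨s, hs, hst⟩ := h2 z n.toNat (B.toNat + m)
    refine ⟨(s - m : ℕ), by omega, fun t ht0 ht1 => ?_⟩
    lift t to ℕ using ht0
    rw [hst t (by omega), ← Nat.cast_add, h1]
    congr 1
    omega

theorem rc_le {x : ℕ → A} {n i j : ℕ} (hij : i < j) (h : ∀ t < n, x (i + t) = x (j + t)) :
    rc n x ≤ j + n := by
  refine Nat.sInf_le ⟨i, by omega, fun t ht => ?_⟩
  rw [h t ht, Nat.add_sub_cancel]

end QS

theorem repExp_le_of_quasiSturmian {A : Type*} [Fintype A] (x : ℕ → A)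
    (hx : IsQuasiSturmian x) :
    repExp x ≤ ((Real.sqrt 10 - 3 / 2 : ℝ) : EReal) := by
  by_contra hcon
  rw [not_le] at hcon
  obtain ⟨c, hc1, hc2⟩ := EReal.lt_iff_exists_real_btwn.1 hcon
  have hc1 : Real.sqrt 10 - 3 / 2 < c := EReal.coe_lt_coe_iff.1 hc1
  obtain ⟨N, hN⟩ := eventually_atTop.1 (eventually_lt_of_lt_liminf hc2)
  obtain ⟨X, m, n₀, h1, G⟩ := QS.exists_good hx
  obtain ⟨γ, hγ1, hγ2⟩ := exists_between (show Real.sqrt 10 - 5 / 2 < c - 1 by linarith)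
  -- the first `m` letters, cut off by passing to `X`, do not matter for long factors
  obtain ⟨M, hM⟩ := exists_nat_gt ((m : ℝ) / (c - 1 - γ))
  rw [div_lt_iff₀ (by linarith)] at hM
  refine G.contra γ hγ1 (M + N + 1 : ℕ) fun n hn i j hi hij h => ?_
  lift n to ℕ using by omega
  lift i to ℕ using hi
  lift j to ℕ using by omega
  have h2 : rc n x ≤ m + j + n := by
    refine QS.rc_le (i := m + i) (by omega) fun t ht => ?_
    have := h t (by omega) (by omega)
    rw [← Nat.cast_add, ← Nat.cast_add, h1, h1] at this
    rwa [add_assoc, add_assoc]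
  have h3 : c < (rc n x : ℝ) / n := EReal.coe_lt_coe_iff.1 (hN n (by omega))
  have hn0 : (0 : ℝ) < n := by
    have : 0 < n := by omega
    exact_mod_cast this
  rw [lt_div_iff₀ hn0] at h3
  have h2' : (rc n x : ℝ) ≤ m + j + n := by exact_mod_cast h2
  have h4 : (M : ℝ) ≤ n := by
    have : M ≤ n := by omega
    exact_mod_cast this
  have h5 : (M : ℝ) * (c - 1 - γ) ≤ n * (c - 1 - γ) :=
    mul_le_mul_of_nonneg_right h4 (by linarith)
  push_cast
  nlinarith
end
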